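/- arXiv:2103.04587 — 3 statements merged into one kernel-verified Lean document; each statement's English description precedes it below -/
import Mathlib

section
/- Let k ∈ ℕ, and for each i ∈ {1,…,k} let G_i and H_i be connected simple graphs such that | |G_i| − |H_i| | ≤ 2. Then q( (G₁ ∪ … ∪ G_k) ∨ (H₁ ∪ … ∪ H_k) ) = 2. -/
open Matrix Filter

/-- `A ∈ S(G)`: real symmetric matrix whose off-diagonal zero pattern is given by `G`. -/
def inS {V : Type*} (G : SimpleGraph V) (A : Matrix V V ℝ) : Prop :=
  A.IsSymm ∧ ∀ i j : V, i ≠ j → (A i j ≠ 0 ↔ G.Adj i j)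

/-- The spectrum of a matrix, as the multiset of roots of its characteristic polynomial. -/
noncomputable def specMultiset {V : Type*} [Fintype V] [DecidableEq V]
    (A : Matrix V V ℝ) : Multiset ℝ :=
  A.charpoly.roots

/-- The number of distinct eigenvalues of a matrix. -/
noncomputable def qMat {V : Type*} [Fintype V] [DecidableEq V] (A : Matrix V V ℝ) : ℕ :=
  (specMultiset A).toFinset.card

/-- `q(G)`: the minimum number of distinct eigenvalues over matrices in `S(G)`. -/
noncomputable def qGraph {V : Type*} [Fintype V] [DecidableEq V] (G : SimpleGraph V) : ℕ :=
  sInf {q | ∃ A : Matrix V V ℝ, inS G A ∧ qMat A = q}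

/-- The strong spectral property. -/
def HasSSP {V : Type*} [Fintype V] [DecidableEq V] (A : Matrix V V ℝ) : Prop :=
  ∀ X : Matrix V V ℝ, X.IsSymm → A * X = X * A →
    Matrix.hadamard A X = 0 → Matrix.hadamard (1 : Matrix V V ℝ) X = 0 → X = 0

/-- Generic realisability of a multiset of eigenvalues for a graph. -/
def GenericallyRealisable {V : Type*} [Fintype V] [DecidableEq V]
    (G : SimpleGraph V) (σ : Multiset ℝ) : Prop :=
  ∀ Y : Finset (V → ℝ), (∀ y ∈ Y, y ≠ 0) →
    ∃ (d : V → ℝ) (U : Matrix V V ℝ),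
      Multiset.map d Finset.univ.val = σ ∧ Uᵀ * U = 1 ∧
      inS G (U * Matrix.diagonal d * Uᵀ) ∧
      ∀ y ∈ Y, ∀ i, U.mulVec y i ≠ 0

/-- The partial join `(G₁, X) ∨ G₂`: the disjoint union of `G₁` and `G₂` together with all
edges joining vertices of `X ⊆ V(G₁)` to vertices of `G₂`. -/
def partialJoin {α β : Type*} (G₁ : SimpleGraph α) (X : Set α) (G₂ : SimpleGraph β) :
    SimpleGraph (α ⊕ β) where
  Adj x y :=
    (∃ a b, G₁.Adj a b ∧ x = Sum.inl a ∧ y = Sum.inl b) ∨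
    (∃ a b, G₂.Adj a b ∧ x = Sum.inr a ∧ y = Sum.inr b) ∨
    (∃ a ∈ X, ∃ b, x = Sum.inl a ∧ y = Sum.inr b) ∨
    (∃ a ∈ X, ∃ b, x = Sum.inr b ∧ y = Sum.inl a)
  symm := by
    constructor
    rintro x y (⟨a, b, hab, rfl, rfl⟩ | ⟨a, b, hab, rfl, rfl⟩ | ⟨a, ha, b, rfl, rfl⟩ |
      ⟨a, ha, b, rfl, rfl⟩)
    · exact Or.inl ⟨b, a, hab.symm, rfl, rfl⟩
    · exact Or.inr (Or.inl ⟨b, a, hab.symm, rfl, rfl⟩)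
    · exact Or.inr (Or.inr (Or.inr ⟨a, ha, b, rfl, rfl⟩))
    · exact Or.inr (Or.inr (Or.inl ⟨a, ha, b, rfl, rfl⟩))
  loopless := by
    constructor
    rintro x (⟨a, b, hab, rfl, h⟩ | ⟨a, b, hab, rfl, h⟩ | ⟨a, ha, b, rfl, h⟩ | ⟨a, ha, b, rfl, h⟩)
    · cases h; exact hab.ne rfl
    · cases h; exact hab.ne rfl
    · exact (Sum.inl_ne_inr h).elim
    · exact (Sum.inr_ne_inl h).elim

/-- The join `G₁ ∨ G₂` of two graphs. -/
def graphJoin {α β : Type*} (G₁ : SimpleGraph α) (G₂ : SimpleGraph β) : SimpleGraph (α ⊕ β) :=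
  partialJoin G₁ Set.univ G₂

/-- The disjoint union of a family of graphs. -/
def sigmaGraph {ι : Type*} {α : ι → Type*} (G : ∀ i, SimpleGraph (α i)) :
    SimpleGraph (Σ i, α i) where
  Adj x y := ∃ (i : ι) (a b : α i), (G i).Adj a b ∧ x = ⟨i, a⟩ ∧ y = ⟨i, b⟩
  symm := by
    constructor
    rintro x y ⟨i, a, b, hab, rfl, rfl⟩
    exact ⟨i, b, a, hab.symm, rfl, rfl⟩
  loopless := by
    constructor
    rintro x ⟨i, a, b, hab, rfl, h⟩
    obtain rfl : a = b := by simpa using h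
    exact hab.ne rfl

open Topology

lemma aux_exists_diag {V : Type*} [Fintype V] [DecidableEq V] (lam : V → ℝ)
    (hinj : Function.Injective lam) (E : ℝ → Matrix V V ℝ)
    (hE : ∀ i j, ContDiff ℝ 1 (fun e => E e i j)) (hE0 : E 0 = 0) :
    ∃ d : ℝ → V → ℝ, Tendsto d (𝓝 0) (𝓝 lam) ∧
      ∀ᶠ e in 𝓝 0, ∀ i, det (diagonal (fun l => lam i - d e l) - E e) = 0 := by
  let F : ℝ × (V → ℝ) → (V → ℝ) := fun x i => det (diagonal (fun l => lam i - x.2 l) - E x.1)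
  have hF : ContDiff ℝ 1 F := by
    rw [contDiff_pi]
    intro i
    simp only [F, Matrix.det_apply]
    refine ContDiff.sum fun σ _ => ContDiff.const_smul _ (contDiff_prod fun j _ => ?_)
    have h1 : ContDiff ℝ 1 (fun x : ℝ × (V → ℝ) => E x.1 (σ j) j) := (hE _ _).comp contDiff_fst
    have h2 : ContDiff ℝ 1 (fun x : ℝ × (V → ℝ) =>
        diagonal (fun l => lam i - x.2 l) (σ j) j) := by
      by_cases h : σ j = j
      · simp only [h, diagonal_apply_eq]
        exact contDiff_const.sub ((contDiff_apply ℝ ℝ j).comp contDiff_snd)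
      · simp only [diagonal_apply_ne _ h]
        exact contDiff_const
    exact h2.sub h1
  have hs : HasStrictFDerivAt F (fderiv ℝ F (0, lam)) (0, lam) :=
    hF.contDiffAt.hasStrictFDerivAt (by norm_num)
  set c : V → ℝ := fun i => -∏ l ∈ Finset.univ.erase i, (lam i - lam l) with hc
  have hc0 : ∀ i, c i ≠ 0 := by
    intro i
    simp only [hc, neg_ne_zero]
    refine Finset.prod_ne_zero_iff.2 fun l hl => ?_
    have := Finset.ne_of_mem_erase hl
    exact sub_ne_zero.2 fun h => this (hinj h).symm
  have hder : ∀ h : V → ℝ, ∀ i, (fderiv ℝ F (0, lam)) (0, h) i = c i * h i := by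
    intro h i
    have h1 : HasDerivAt (fun t : ℝ => ((0 : ℝ), lam + t • h)) ((0 : ℝ), h) 0 := by
      refine (hasDerivAt_const _ _).prodMk ?_
      simpa using ((hasDerivAt_id (0 : ℝ)).smul_const h).const_add lam
    have h2 : HasDerivAt (fun t : ℝ => F (0, lam + t • h)) (fderiv ℝ F (0, lam) (0, h)) 0 := by
      have h0 : HasFDerivAt F (fderiv ℝ F (0, lam)) ((0 : ℝ), lam + (0 : ℝ) • h) := by
        simpa using hs.hasFDerivAt
      exact h0.comp_hasDerivAt (0 : ℝ) h1
    have h3 := (hasDerivAt_pi.1 h2) i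
    have h4 : (fun t : ℝ => F (0, lam + t • h) i) =
        fun t => ∏ l, (lam i - (lam l + t * h l)) := by
      funext t
      simp [F, hE0, det_diagonal]
    rw [h4] at h3
    have h5 : HasDerivAt (fun t : ℝ => ∏ l, (lam i - (lam l + t * h l)))
        (∑ l, (∏ j ∈ Finset.univ.erase l, (lam i - (lam j + 0 * h j))) • (-h l)) 0 := by
      refine HasDerivAt.fun_finsetProd fun l _ => ?_
      simpa using (((hasDerivAt_id (0 : ℝ)).mul_const (h l)).const_add (lam l)).const_sub (lam i)
    rw [h3.unique h5, Finset.sum_eq_single i]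
    · simp [hc]
    · intro l _ hl
      have : ∏ j ∈ Finset.univ.erase l, (lam i - (lam j + 0 * h j)) = 0 :=
        Finset.prod_eq_zero (Finset.mem_erase.2 ⟨hl.symm, Finset.mem_univ i⟩) (by simp)
      rw [this, zero_smul]
    · simp
  have hinv : (fderiv ℝ F (0, lam) ∘L .inr ℝ ℝ (V → ℝ)).IsInvertible := by
    let e : (V → ℝ) ≃L[ℝ] (V → ℝ) :=
      ContinuousLinearEquiv.piCongrRight fun i => ContinuousLinearEquiv.unitsEquivAut ℝ (Units.mk0 (c i) (hc0 i))
    refine ⟨e, ?_⟩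
    ext h i
    simp [e, ContinuousLinearMap.comp_apply, hder, mul_comm]
  refine ⟨hs.implicitFunctionOfProdDomain hinv, hs.tendsto_implicitFunctionOfProdDomain hinv, ?_⟩
  have := hs.eventually_apply_implicitFunctionOfProdDomain hinv
  have hF0 : F (0, lam) = 0 := by
    funext i
    simp only [F, hE0, sub_zero, det_diagonal, Pi.zero_apply]
    exact Finset.prod_eq_zero (Finset.mem_univ i) (by simp)
  filter_upwards [this] with e he i
  have := congrFun he i
  rw [hF0] at this
  exact this

lemma aux_parent {V : Type*} {T : SimpleGraph V} (hT : T.IsTree) {i j l l' : V}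
    (h : T.Adj j l) (h' : T.Adj j l') (hd : T.dist i j = T.dist i l + 1)
    (hd' : T.dist i j = T.dist i l' + 1) : l = l' := by
  obtain ⟨p, hp⟩ := hT.1.exists_walk_length_eq_dist i l
  obtain ⟨p', hp'⟩ := hT.1.exists_walk_length_eq_dist i l'
  have h1 : (p.concat h.symm).IsPath := SimpleGraph.Walk.isPath_of_length_eq_dist _ (by simp [hp, hd])
  have h2 : (p'.concat h'.symm).IsPath := SimpleGraph.Walk.isPath_of_length_eq_dist _ (by simp [hp', hd'])
  have h3 := (hT.existsUnique_path i j).unique h1 h2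
  have := congrArg SimpleGraph.Walk.penultimate h3
  simpa using this

lemma aux_asymp {V : Type*} [Fintype V] [DecidableEq V] {T : SimpleGraph V} (hT : T.IsTree)
    (N : ℕ) (hN : ∀ i j, T.dist i j < N) (E : ℝ → Matrix V V ℝ)
    (hE1 : ∀ e i j, T.Adj i j → E e i j = e)
    (hE2 : ∀ e i j, ¬ T.Adj i j → E e i j = 0 ∨ E e i j = e ^ N)
    (lam : V → ℝ) (hinj : Function.Injective lam) (d : ℝ → V → ℝ)
    (hd : Tendsto d (𝓝[>] 0) (𝓝 lam)) (i : V) (z : ℝ → V → ℝ)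
    (hz : ∀ j, Tendsto (fun e => z e j) (𝓝[>] 0) (𝓝 (if j = i then 1 else 0)))
    (heq : ∀ᶠ e in 𝓝[>] 0, ∀ j, (lam i - d e j) * z e j = ∑ l, E e j l * z e l) (j : V) :
    ∀ᶠ e in 𝓝[>] 0, z e j ≠ 0 := by
  classical
  have hpos : ∀ᶠ e : ℝ in 𝓝[>] 0, 0 < e := eventually_mem_nhdsWithin
  have key : ∀ r : ℕ, ∀ j, r ≤ T.dist i j → ∃ c : ℝ,
      Tendsto (fun e => z e j / e ^ r) (𝓝[>] 0) (𝓝 c) ∧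
      (T.dist i j = r → c ≠ 0) ∧ (r < T.dist i j → c = 0) := by
    intro r
    induction r with
    | zero =>
      intro j _
      refine ⟨_, by simpa using hz j, ?_, ?_⟩
      · intro h
        have : i = j := (hT.1.dist_eq_zero_iff).1 h
        simp [this]
      · intro h
        have : j ≠ i := by rintro rfl; simp at h
        simp [this]
    | succ r ih =>
      intro j hj
      have hji : j ≠ i := by rintro rfl; simp at hj
      have hlam : lam i - lam j ≠ 0 := sub_ne_zero.2 fun h => hji (hinj h).symm
      have hdj : Tendsto (fun e => lam i - d e j) (𝓝[>] 0) (𝓝 (lam i - lam j)) :=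
        tendsto_const_nhds.sub ((tendsto_pi_nhds.1 hd) j)
      have hrN : r + 1 < N := lt_of_le_of_lt hj (hN i j)
      have hadj : ∀ l, T.Adj j l → r ≤ T.dist i l := by
        intro l hl
        rcases hT.dist_eq_dist_add_one_of_adj i hl with h | h <;> omega
      have hterm : ∀ l, ∃ c : ℝ,
          Tendsto (fun e => E e j l * z e l / e ^ (r + 1)) (𝓝[>] 0) (𝓝 c) ∧
          (T.Adj j l → T.dist i l = r → c ≠ 0) ∧
          (¬ (T.Adj j l ∧ T.dist i l = r) → c = 0) := by
        intro l
        by_cases hl : T.Adj j l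
        · obtain ⟨c, h1, h2, h3⟩ := ih l (hadj l hl)
          refine ⟨c, h1.congr' ?_, fun _ => h2, ?_⟩
          · filter_upwards [hpos] with e he
            rw [hE1 _ _ _ hl, pow_succ]
            field_simp
          · intro h
            have := hadj l hl
            exact h3 (lt_of_le_of_ne this fun h' => h ⟨hl, h'.symm⟩)
        · refine ⟨0, ?_, fun h => absurd h hl, fun _ => rfl⟩
          have hb : Tendsto (fun e : ℝ => |e ^ (N - (r + 1)) * z e l|) (𝓝[>] 0) (𝓝 0) := by
            have h1 : Tendsto (fun e : ℝ => e ^ (N - (r + 1))) (𝓝[>] 0) (𝓝 0) := by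
              have : Tendsto (fun e : ℝ => e ^ (N - (r + 1))) (𝓝 0) (𝓝 (0 ^ (N - (r + 1)))) :=
                (continuous_pow _).tendsto 0
              rw [zero_pow (by omega)] at this
              exact this.mono_left nhdsWithin_le_nhds
            have := (h1.mul (hz l)).abs
            simpa using this
          refine squeeze_zero_norm' ?_ hb
          filter_upwards [hpos] with e he
          rcases hE2 e j l hl with h | h
          · rw [h, zero_mul, zero_div, norm_zero]
            exact abs_nonneg _
          · rw [h, Real.norm_eq_abs]
            refine le_of_eq (congrArg _ ?_)
            rw [show N = (N - (r + 1)) + (r + 1) by omega, pow_add]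
            simp
            field_simp
      choose c hc1 hc2 hc3 using hterm
      have hsum : Tendsto (fun e => (∑ l, E e j l * z e l / e ^ (r + 1)) / (lam i - d e j))
          (𝓝[>] 0) (𝓝 ((∑ l, c l) / (lam i - lam j))) :=
        (tendsto_finsetSum _ fun l _ => hc1 l).div hdj hlam
      refine ⟨_, hsum.congr' ?_, ?_, ?_⟩
      · filter_upwards [hpos, heq, hdj.eventually_ne hlam] with e he h1 h2
        rw [← Finset.sum_div, ← h1 j]
        field_simp
      · intro hdist
        obtain ⟨p, hp⟩ := hT.1.exists_walk_length_eq_dist i j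
        have hpar : ∃ l, T.Adj j l ∧ T.dist i l = r := by
          have hnil : ¬ p.Nil := by
            intro h
            exact hji h.eq.symm
          refine ⟨p.penultimate, (p.adj_penultimate hnil).symm, ?_⟩
          have h1 : T.dist i p.penultimate ≤ r := by
            have := SimpleGraph.dist_le p.dropLast
            simp at this
            omega
          have := hadj _ (p.adj_penultimate hnil).symm
          omega
        obtain ⟨l, hl, hlr⟩ := hpar
        rw [Finset.sum_eq_single l]
        · exact div_ne_zero (hc2 l hl hlr) hlam
        · intro l' _ hne
          refine hc3 l' fun h => hne ?_
          exact aux_parent (i := i) hT h.1 hl (by omega) (by omega)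
        · simp
      · intro hlt
        rw [Finset.sum_eq_zero, zero_div]
        intro l _
        refine hc3 l fun h => ?_
        rcases hT.dist_eq_dist_add_one_of_adj i h.1 with h' | h' <;> omega
  obtain ⟨c, h1, h2, -⟩ := key _ j le_rfl
  filter_upwards [h1.eventually_ne (h2 rfl)] with e he h
  simp [h] at he

lemma aux_realise {V : Type*} [Fintype V] [DecidableEq V] (G : SimpleGraph V)
    (hG : G.Connected) (lam : V → ℝ) (hinj : Function.Injective lam) :
    ∃ U : ℝ → Matrix V V ℝ, Tendsto U (𝓝[>] 0) (𝓝 1) ∧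
      ∀ᶠ e in 𝓝[>] 0, (U e)ᵀ * U e = 1 ∧ inS G (U e * diagonal lam * (U e)ᵀ) ∧
        ∀ i j, U e i j ≠ 0 := by
  classical
  obtain ⟨T, hTG, hT⟩ := hG.exists_isTree_le
  set N : ℕ := 1 + ∑ x : V × V, T.dist x.1 x.2 with hNdef
  have hN : ∀ i j, T.dist i j < N := by
    intro i j
    have : T.dist i j ≤ ∑ x : V × V, T.dist x.1 x.2 :=
      Finset.single_le_sum (f := fun x : V × V => T.dist x.1 x.2) (fun _ _ => Nat.zero_le _)
        (Finset.mem_univ (i, j))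
    omega
  let E : ℝ → Matrix V V ℝ := fun e =>
    Matrix.of fun i j => if T.Adj i j then e else if G.Adj i j then e ^ N else 0
  have hEapp : ∀ e i j, E e i j = if T.Adj i j then e else if G.Adj i j then e ^ N else 0 :=
    fun _ _ _ => rfl
  have hEsymm : ∀ e, (E e)ᵀ = E e := by
    intro e
    ext i j
    simp [hEapp, T.adj_comm, G.adj_comm]
  have hEc : ∀ i j, ContDiff ℝ 1 (fun e => E e i j) := by
    intro i j
    simp only [hEapp]
    split_ifs <;> fun_prop
  have hE0 : E 0 = 0 := by
    ext i j
    simp [hEapp, hNdef]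
  obtain ⟨d, hd, hdet⟩ := aux_exists_diag lam hinj E hEc hE0
  let M : ℝ → V → Matrix V V ℝ := fun e i => diagonal (fun l => lam i - d e l) - E e
  let y : ℝ → V → V → ℝ := fun e i j => adjugate (M e i) j i
  let P : V → ℝ := fun i => ∏ l ∈ Finset.univ.erase i, (lam i - lam l)
  have hP : ∀ i, P i ≠ 0 := by
    intro i
    refine Finset.prod_ne_zero_iff.2 fun l hl => ?_
    have := Finset.ne_of_mem_erase hl
    exact sub_ne_zero.2 fun h => this (hinj h).symm
  have hM : ∀ i, Tendsto (fun e => M e i) (𝓝 0) (𝓝 (diagonal fun l => lam i - lam l)) := by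
    intro i
    refine tendsto_pi_nhds.2 fun j => tendsto_pi_nhds.2 fun l => ?_
    have h1 : Tendsto (fun e => E e j l) (𝓝 0) (𝓝 0) := by
      have := (hEc j l).continuous.tendsto 0
      simpa [hE0] using this
    have h2 : Tendsto (fun e => diagonal (fun l => lam i - d e l) j l) (𝓝 0)
        (𝓝 (diagonal (fun l => lam i - lam l) j l)) := by
      by_cases h : j = l
      · subst h
        simp only [diagonal_apply_eq]
        exact tendsto_const_nhds.sub ((tendsto_pi_nhds.1 hd) j)
      · simp only [diagonal_apply_ne _ h]
        exact tendsto_const_nhds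
    simpa [M] using h2.sub h1
  have hy : ∀ i j, Tendsto (fun e => y e i j) (𝓝 0) (𝓝 (if j = i then P i else 0)) := by
    intro i j
    have hcont : Continuous fun X : Matrix V V ℝ => adjugate X j i :=
      (continuous_id.matrix_adjugate).matrix_elem j i
    have := (hcont.tendsto _).comp (hM i)
    have hv : (if j = i then P i else 0) = adjugate (diagonal fun l => lam i - lam l) j i := by
      rw [adjugate_diagonal]
      by_cases h : j = i
      · subst h
        simp [P]
      · simp [h]
    rw [hv]
    exact this
  let z : ℝ → V → V → ℝ := fun e i j => y e i j / y e i i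
  have hz : ∀ i j, Tendsto (fun e => z e i j) (𝓝 0) (𝓝 (if j = i then 1 else 0)) := by
    intro i j
    have h1 := hy i i
    simp only [if_true] at h1
    have := (hy i j).div h1 (hP i)
    have hv : (if j = i then (1 : ℝ) else 0) = (if j = i then P i else 0) / P i := by
      by_cases h : j = i <;> simp [h, hP i]
    rw [hv]
    exact this
  have hzii : ∀ i, ∀ᶠ e in 𝓝 0, z e i i = 1 := by
    intro i
    have h1 := hy i i
    simp only [if_true] at h1
    filter_upwards [h1.eventually_ne (hP i)] with e he
    exact div_self he
  have hzeq : ∀ i, ∀ᶠ e in 𝓝 0, ∀ j, (lam i - d e j) * z e i j = ∑ l, E e j l * z e i l := by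
    intro i
    filter_upwards [hdet] with e he j
    have h1 := congrFun (congrFun (Matrix.mul_adjugate (M e i)) j) i
    have h2 : det (M e i) = 0 := he i
    rw [h2, zero_smul, Matrix.mul_apply] at h1
    have h3 : (lam i - d e j) * y e i j - ∑ l, E e j l * y e i l = 0 := by
      rw [← Matrix.zero_apply j i, ← h1]
      simp only [M, Matrix.sub_apply, sub_mul, Finset.sum_sub_distrib, diagonal_apply, ite_mul,
        zero_mul, Finset.sum_ite_eq, Finset.mem_univ, if_true]
      rfl
    have h4 := sub_eq_zero.1 h3
    simp only [z]
    rw [← mul_div_assoc, h4, Finset.sum_div]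
    simp only [mul_div_assoc]
  have hznz : ∀ i j, ∀ᶠ e in 𝓝[>] 0, z e i j ≠ 0 := by
    intro i j
    refine aux_asymp hT N hN E (fun e a b h => by simp [hEapp, h])
      (fun e a b h => ?_) lam hinj d (hd.mono_left nhdsWithin_le_nhds) i (fun e => z e i)
      (fun j => (hz i j).mono_left nhdsWithin_le_nhds)
      ((hzeq i).filter_mono nhdsWithin_le_nhds) j
    by_cases h' : G.Adj a b <;> simp [hEapp, h, h']
  let s : ℝ → V → ℝ := fun e i => Real.sqrt (∑ l, z e i l ^ 2)
  let U : ℝ → Matrix V V ℝ := fun e => Matrix.of fun j i => z e i j / s e i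
  refine ⟨U, ?_, ?_⟩
  · refine tendsto_pi_nhds.2 fun j => tendsto_pi_nhds.2 fun i => ?_
    have hs : Tendsto (fun e => s e i) (𝓝 0) (𝓝 1) := by
      have h1 : Tendsto (fun e => ∑ l, z e i l ^ 2) (𝓝 0)
          (𝓝 (∑ l, (if l = i then (1 : ℝ) else 0) ^ 2)) :=
        tendsto_finsetSum _ fun l _ => (hz i l).pow 2
      have h2 := (Real.continuous_sqrt.tendsto _).comp h1
      have hv : Real.sqrt (∑ l, (if l = i then (1 : ℝ) else 0) ^ 2) = 1 := by simp [ite_pow]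
      rw [hv] at h2
      exact h2
    have := ((hz i j).div hs one_ne_zero).mono_left (nhdsWithin_le_nhds (s := Set.Ioi 0))
    have hv : (1 : Matrix V V ℝ) j i = (if j = i then (1 : ℝ) else 0) / 1 := by
      simp [Matrix.one_apply]
    rw [hv]
    exact this
  · have hpos : ∀ᶠ e : ℝ in 𝓝[>] 0, 0 < e := eventually_mem_nhdsWithin
    filter_upwards [hpos, (eventually_all.2 hzii).filter_mono nhdsWithin_le_nhds,
      (eventually_all.2 hzeq).filter_mono nhdsWithin_le_nhds,
      eventually_all.2 fun i => eventually_all.2 (hznz i)] with e he h1 h2 h3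
    have hsum : ∀ i, 0 < ∑ l, z e i l ^ 2 := by
      intro i
      refine Finset.sum_pos (fun l _ => ?_) ⟨i, Finset.mem_univ i⟩
      have := h3 i l
      positivity
    have hspos : ∀ i, 0 < s e i := fun i => Real.sqrt_pos.2 (hsum i)
    set A : Matrix V V ℝ := diagonal (d e) + E e with hA
    have hAs : Aᵀ = A := by
      rw [hA, transpose_add, hEsymm, diagonal_transpose]
    have hAU : A * U e = U e * diagonal lam := by
      ext j i
      rw [hA, Matrix.add_mul, Matrix.add_apply, diagonal_mul, mul_diagonal, Matrix.mul_apply]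
      have := h2 i j
      simp only [U, Matrix.of_apply]
      have h4 : ∑ l, E e j l * (z e i l / s e i) = (∑ l, E e j l * z e i l) / s e i := by
        rw [Finset.sum_div]
        simp only [mul_div_assoc]
      rw [h4, ← this]
      ring
    have hK : diagonal lam * ((U e)ᵀ * U e) = ((U e)ᵀ * U e) * diagonal lam := by
      have h5 := congrArg Matrix.transpose hAU
      rw [transpose_mul, transpose_mul, hAs, diagonal_transpose] at h5
      rw [← Matrix.mul_assoc, ← h5, Matrix.mul_assoc, hAU, Matrix.mul_assoc]
    have hUU : (U e)ᵀ * U e = 1 := by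
      ext i j
      by_cases hij : i = j
      · subst hij
        rw [Matrix.mul_apply, Matrix.one_apply_eq]
        simp only [U, transpose_apply, Matrix.of_apply]
        have h6 : ∀ x, z e i x / s e i * (z e i x / s e i) = z e i x ^ 2 / (s e i) ^ 2 := by
          intro x; ring
        simp only [h6]
        rw [← Finset.sum_div, Real.sq_sqrt (hsum i).le]
        exact div_self (hsum i).ne'
      · rw [Matrix.one_apply_ne hij]
        have h7 := congrFun (congrFun hK i) j
        rw [diagonal_mul, mul_diagonal] at h7
        have h8 : (lam i - lam j) * ((U e)ᵀ * U e) i j = 0 := by linarith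
        rcases mul_eq_zero.1 h8 with h | h
        · exact absurd (hinj (sub_eq_zero.1 h)) hij
        · exact h
    have hUU' : U e * (U e)ᵀ = 1 := mul_eq_one_comm.1 hUU
    have hfin : U e * diagonal lam * (U e)ᵀ = A := by
      rw [← hAU, Matrix.mul_assoc, hUU', Matrix.mul_one]
    refine ⟨hUU, ?_, fun j i => div_ne_zero (h3 i j) (hspos i).ne'⟩
    rw [hfin]
    refine ⟨hAs, fun i j hij => ?_⟩
    rw [hA, Matrix.add_apply, diagonal_apply_ne _ hij, zero_add, hEapp]
    by_cases hTadj : T.Adj i j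
    · simp [hTadj, hTG hTadj, he.ne']
    · by_cases hGadj : G.Adj i j
      · simp [hTadj, hGadj, he.ne']
      · simp [hTadj, hGadj]

/-- The data attached to one pair of components. -/
def CompData {α β : Type*} [Fintype α] [Fintype β] [DecidableEq α] [DecidableEq β]
    (G : SimpleGraph α) (H : SimpleGraph β) (w : ℝ) (A : Matrix α α ℝ) (C : Matrix β β ℝ)
    (B : Matrix α β ℝ) (u : Matrix α Unit ℝ) (v : Matrix β Unit ℝ) : Prop :=
  inS G A ∧ inS H C ∧ (∀ a, u a () ≠ 0) ∧ (∀ b, v b () ≠ 0) ∧ uᵀ * u = 1 ∧ vᵀ * v = 1 ∧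
  A * u = 0 ∧ C * v = 0 ∧ B * v = 0 ∧ Bᵀ * u = 0 ∧ A * A + B * Bᵀ + u * uᵀ = 1 ∧
  C * C + Bᵀ * B + v * vᵀ = 1 ∧ A * B + B * C = 0 ∧ ∀ a b, B a b + w * (u a () * v b ()) ≠ 0

lemma CompData.swap {α β : Type*} [Fintype α] [Fintype β] [DecidableEq α] [DecidableEq β]
    {G : SimpleGraph α} {H : SimpleGraph β} {w : ℝ} {A : Matrix α α ℝ} {C : Matrix β β ℝ}
    {B : Matrix α β ℝ} {u : Matrix α Unit ℝ} {v : Matrix β Unit ℝ}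
    (h : CompData G H w A C B u v) : CompData H G w C A Bᵀ v u := by
  obtain ⟨h1, h2, h3, h4, h5, h6, h7, h8, h9, h10, h11, h12, h13, h14⟩ := h
  refine ⟨h2, h1, h4, h3, h6, h5, h8, h7, h10, by simpa using h9, by simpa using h12,
    by simpa using h11, ?_, fun b a => ?_⟩
  · have := congrArg Matrix.transpose h13
    rw [transpose_add, transpose_mul, transpose_mul, h1.1, h2.1, transpose_zero] at this
    rw [add_comm]
    exact this
  · have := h14 a b
    rwa [mul_comm (u a ())] at this

lemma aux_comp {m p : ℕ} (G : SimpleGraph (Fin m)) (H : SimpleGraph (Fin p))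
    (hG : G.Connected) (hH : H.Connected) (h1 : p ≤ m) (h2 : m ≤ p + 2) (w : ℝ) (hw : w ≠ 0) :
    ∃ A C B u v, CompData G H w A C B u v := by
  have hp : 0 < p := by
    obtain ⟨x⟩ := hH.nonempty
    exact x.pos
  have hp' : (0 : ℝ) < p := by exact_mod_cast hp
  -- eigenvalues
  let lam : Fin m → ℝ := fun a => if a.val ≤ p then (a.val : ℝ) / p else -1
  let mu : Fin p → ℝ := fun b => -((b.val : ℝ) / p)
  have hlam : Function.Injective lam := by
    intro a b hab
    simp only [lam] at hab
    have h3 : (0 : ℝ) ≤ (a.val : ℝ) / p := by positivity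
    have h4 : (0 : ℝ) ≤ (b.val : ℝ) / p := by positivity
    have ha := a.isLt
    have hb := b.isLt
    split_ifs at hab with h5 h6 h6
    · rw [div_left_inj' hp'.ne'] at hab
      exact Fin.ext (by exact_mod_cast hab)
    · linarith
    · linarith
    · exact Fin.ext (by omega)
  have hmu : Function.Injective mu := by
    intro a b hab
    simp only [mu, neg_inj] at hab
    rw [div_left_inj' hp'.ne'] at hab
    exact Fin.ext (by exact_mod_cast hab)
  obtain ⟨UU, -, hU⟩ := aux_realise G hG lam hlam
  obtain ⟨VV, hV1, hV⟩ := aux_realise H hH mu hmu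
  obtain ⟨e0, hU1, hU2, hU3⟩ := hU.exists
  set U := UU e0 with hUdef
  clear_value U
  have hUU : U * Uᵀ = 1 := mul_eq_one_comm.1 hU1
  -- the diagonal coupling
  let s : Fin p → ℝ := fun b => if b.val = 0 then 0 else Real.sqrt (1 - ((b.val : ℝ) / p) ^ 2)
  have hs2 : ∀ b : Fin p, b.val ≠ 0 → s b * s b = 1 - ((b.val : ℝ) / p) ^ 2 ∧ s b ≠ 0 := by
    intro b hb
    have h3 : (b.val : ℝ) / p < 1 := by
      rw [div_lt_one hp']
      exact_mod_cast b.isLt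
    have h4 : (0 : ℝ) ≤ (b.val : ℝ) / p := by positivity
    have h5 : 0 < 1 - ((b.val : ℝ) / p) ^ 2 := by nlinarith
    simp only [s, hb, if_false]
    exact ⟨Real.mul_self_sqrt h5.le, (Real.sqrt_pos.2 h5).ne'⟩
  let S : Matrix (Fin m) (Fin p) ℝ := Matrix.of fun a b => if a.val = b.val then s b else 0
  let f : Matrix (Fin m) Unit ℝ := Matrix.of fun a _ => if a.val = 0 then 1 else 0
  let g : Matrix (Fin p) Unit ℝ := Matrix.of fun b _ => if b.val = 0 then 1 else 0
  have ff : fᵀ * f = 1 := by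
    ext x y
    rw [Matrix.mul_apply, Finset.sum_eq_single (⟨0, by omega⟩ : Fin m)]
    · simp [f]
    · intro b _ hb
      have : b.val ≠ 0 := fun h => hb (Fin.ext h)
      simp [f, this]
    · simp
  have gg : gᵀ * g = 1 := by
    ext x y
    rw [Matrix.mul_apply, Finset.sum_eq_single (⟨0, by omega⟩ : Fin p)]
    · simp [g]
    · intro b _ hb
      have : b.val ≠ 0 := fun h => hb (Fin.ext h)
      simp [g, this]
    · simp
  have Lf : diagonal lam * f = 0 := by
    ext a x
    rw [diagonal_mul]
    by_cases h : a.val = 0 <;> simp [f, lam, h]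
  have Mg : diagonal mu * g = 0 := by
    ext a x
    rw [diagonal_mul]
    by_cases h : a.val = 0 <;> simp [g, mu, h]
  have Sg : S * g = 0 := by
    ext a x
    rw [Matrix.mul_apply]
    refine Finset.sum_eq_zero fun b _ => ?_
    by_cases h : b.val = 0 <;> simp [g, S, s, h]
  have Sf : Sᵀ * f = 0 := by
    ext b x
    rw [Matrix.mul_apply]
    refine Finset.sum_eq_zero fun a _ => ?_
    by_cases h : a.val = 0
    · by_cases h' : b.val = 0 <;> simp [f, S, s, h, h', eq_comm]
    · simp [f, h]
  have eq1 : diagonal lam * diagonal lam + S * Sᵀ + f * fᵀ = 1 := by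
    ext a a'
    have hf : (f * fᵀ) a a' = if a.val = 0 ∧ a'.val = 0 then 1 else 0 := by
      rw [Matrix.mul_apply]
      by_cases h : a.val = 0 <;> by_cases h' : a'.val = 0 <;> simp [f, h, h']
    have hS : (S * Sᵀ) a a' = if h : a.val < p then (if a = a' then s ⟨a, h⟩ * s ⟨a, h⟩ else 0) else 0 := by
      rw [Matrix.mul_apply]
      split_ifs with h h'
      · subst h'
        rw [Finset.sum_eq_single (⟨a, h⟩ : Fin p)]
        · simp [S]
        · intro b _ hb
          have : a.val ≠ b.val := fun h => hb (Fin.ext h.symm)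
          simp [S, this]
        · simp
      · refine Finset.sum_eq_zero fun b _ => ?_
        by_cases h3 : a.val = b.val
        · have : a'.val ≠ b.val := fun h4 => h' (Fin.ext (h3.trans h4.symm))
          simp [S, this]
        · simp [S, h3]
      · refine Finset.sum_eq_zero fun b _ => ?_
        have : a.val ≠ b.val := by have := b.isLt; omega
        simp [S, this]
    rw [diagonal_mul_diagonal, Matrix.add_apply, Matrix.add_apply, hf, hS]
    by_cases haa : a = a'
    · subst haa
      simp only [diagonal_apply_eq, and_self, if_true, Matrix.one_apply_eq]
      have ha := a.isLt
      by_cases h0 : a.val = 0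
      · simp [lam, h0, s]
      · by_cases hlt : a.val < p
        · rw [dif_pos hlt, if_neg h0, (hs2 ⟨a, hlt⟩ h0).1]
          simp only [lam, hlt.le, if_true]
          ring
        · rw [dif_neg hlt, if_neg h0]
          by_cases hle : a.val ≤ p
          · have : a.val = p := by omega
            simp [lam, this, hp'.ne']
          · simp [lam, hle]
    · have : ¬ (a.val = 0 ∧ a'.val = 0) := fun h => haa (Fin.ext (h.1.trans h.2.symm))
      simp [haa, this]
  have eq2 : diagonal mu * diagonal mu + Sᵀ * S + g * gᵀ = 1 := by
    ext a a'
    have hf : (g * gᵀ) a a' = if a.val = 0 ∧ a'.val = 0 then 1 else 0 := by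
      rw [Matrix.mul_apply]
      by_cases h : a.val = 0 <;> by_cases h' : a'.val = 0 <;> simp [g, h, h']
    have hS : (Sᵀ * S) a a' = if a = a' then s a * s a else 0 := by
      rw [Matrix.mul_apply, Finset.sum_eq_single (⟨a, by omega⟩ : Fin m)]
      · by_cases h : a = a'
        · simp [S, h]
        · have : a.val ≠ a'.val := fun h' => h (Fin.ext h')
          simp [S, h, this]
      · intro b _ hb
        have : b.val ≠ a.val := fun h => hb (Fin.ext h)
        simp [S, this]
      · simp
    rw [diagonal_mul_diagonal, Matrix.add_apply, Matrix.add_apply, hf, hS]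
    by_cases haa : a = a'
    · subst haa
      simp only [diagonal_apply_eq, and_self, if_true, Matrix.one_apply_eq]
      by_cases h0 : a.val = 0
      · simp [mu, h0, s]
      · rw [if_neg h0, (hs2 a h0).1]
        simp only [mu]
        ring
    · have : ¬ (a.val = 0 ∧ a'.val = 0) := fun h => haa (Fin.ext (h.1.trans h.2.symm))
      simp [haa, this]
  have eq3 : diagonal lam * S + S * diagonal mu = 0 := by
    ext a b
    rw [Matrix.add_apply, diagonal_mul, mul_diagonal]
    by_cases h : a.val = b.val
    · have := b.isLt.le
      simp [S, h, lam, mu, this]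
      ring
    · simp [S, h]
  -- choice of V
  let Sw : Matrix (Fin m) (Fin p) ℝ := S + w • (f * gᵀ)
  have hSw : ∀ a b, (U * Sw) a b ≠ 0 := by
    intro a b
    have hgs : ∀ c, (f * gᵀ) c b = if c.val = 0 ∧ b.val = 0 then 1 else 0 := by
      intro c
      rw [Matrix.mul_apply]
      by_cases h : c.val = 0 <;> by_cases h' : b.val = 0 <;> simp [f, g, h, h']
    rw [Matrix.mul_apply, Finset.sum_eq_single (⟨b, by omega⟩ : Fin m)]
    · refine mul_ne_zero (hU3 _ _) ?_
      simp only [Sw, Matrix.add_apply, Matrix.smul_apply, hgs]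
      by_cases h0 : b.val = 0
      · simp [S, s, h0, hw]
      · simpa [S, h0] using (hs2 b h0).2
    · intro c _ hc
      have h3 : c.val ≠ b.val := fun h => hc (Fin.ext h)
      have h4 : ¬ (c.val = 0 ∧ b.val = 0) := by omega
      simp [Sw, hgs, h4, S, h3]
    · simp
  have hlim : ∀ a b, ∀ᶠ e in 𝓝[>] (0 : ℝ), (U * Sw * (VV e)ᵀ) a b ≠ 0 := by
    intro a b
    have hc : Continuous fun X : Matrix (Fin p) (Fin p) ℝ => (U * Sw * Xᵀ) a b :=
      (continuous_const.matrix_mul continuous_id.matrix_transpose).matrix_elem a b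
    have h3 := (hc.tendsto 1).comp hV1
    have h4 : (U * Sw * (1 : Matrix (Fin p) (Fin p) ℝ)ᵀ) a b ≠ 0 := by
      simpa using hSw a b
    exact h3.eventually_ne h4
  obtain ⟨e1, ⟨hV1', hV2, hV3⟩, hB⟩ :=
    (hV.and (eventually_all.2 fun a => eventually_all.2 (hlim a))).exists
  set V := VV e1 with hVdef
  clear_value V
  have hVV : V * Vᵀ = 1 := mul_eq_one_comm.1 hV1'
  have cU : ∀ {q : Type} (X : Matrix (Fin m) q ℝ), Uᵀ * (U * X) = X := by
    intro q X
    rw [← Matrix.mul_assoc, hU1, Matrix.one_mul]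
  have cV : ∀ {q : Type} (X : Matrix (Fin p) q ℝ), Vᵀ * (V * X) = X := by
    intro q X
    rw [← Matrix.mul_assoc, hV1', Matrix.one_mul]
  have uf : ∀ a, (U * f) a () = U a ⟨0, by omega⟩ := by
    intro a
    rw [Matrix.mul_apply, Finset.sum_eq_single (⟨0, by omega⟩ : Fin m)]
    · simp [f]
    · intro b _ hb
      have : b.val ≠ 0 := fun h => hb (Fin.ext h)
      simp [f, this]
    · simp
  have vg : ∀ a, (V * g) a () = V a ⟨0, by omega⟩ := by
    intro a
    rw [Matrix.mul_apply, Finset.sum_eq_single (⟨0, by omega⟩ : Fin p)]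
    · simp [g]
    · intro b _ hb
      have : b.val ≠ 0 := fun h => hb (Fin.ext h)
      simp [g, this]
    · simp
  refine ⟨U * diagonal lam * Uᵀ, V * diagonal mu * Vᵀ, U * S * Vᵀ, U * f, V * g, hU2, hV2,
    ?_, ?_, ?_, ?_, ?_, ?_, ?_, ?_, ?_, ?_, ?_, ?_⟩
  · intro a; rw [uf]; exact hU3 _ _
  · intro a; rw [vg]; exact hV3 _ _
  · rw [transpose_mul, Matrix.mul_assoc, cU, ff]
  · rw [transpose_mul, Matrix.mul_assoc, cV, gg]
  · simp only [Matrix.mul_assoc, cU, Lf, Matrix.mul_zero]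
  · simp only [Matrix.mul_assoc, cV, Mg, Matrix.mul_zero]
  · simp only [Matrix.mul_assoc, cV, Sg, Matrix.mul_zero]
  · simp only [transpose_mul, transpose_transpose, Matrix.mul_assoc, cU, Sf, Matrix.mul_zero]
  · have : U * (diagonal lam * diagonal lam + S * Sᵀ + f * fᵀ) * Uᵀ = 1 := by
      rw [eq1, Matrix.mul_one, hUU]
    rw [← this]
    simp only [transpose_mul, transpose_transpose, Matrix.mul_assoc, cU, cV, Matrix.mul_add,
      Matrix.add_mul]
  · have : V * (diagonal mu * diagonal mu + Sᵀ * S + g * gᵀ) * Vᵀ = 1 := by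
      rw [eq2, Matrix.mul_one, hVV]
    rw [← this]
    simp only [transpose_mul, transpose_transpose, Matrix.mul_assoc, cU, cV, Matrix.mul_add,
      Matrix.add_mul]
  · have : U * (diagonal lam * S + S * diagonal mu) * Vᵀ = 0 := by
      rw [eq3, Matrix.mul_zero, Matrix.zero_mul]
    rw [← this]
    simp only [Matrix.mul_assoc, cU, cV, Matrix.mul_add, Matrix.add_mul]
  · intro a b
    have h3 := hB a b
    have h4 : U * Sw * Vᵀ = U * S * Vᵀ + w • ((U * f) * (V * g)ᵀ) := by
      simp only [Sw, transpose_mul, Matrix.mul_assoc, Matrix.mul_add, Matrix.add_mul,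
        Matrix.mul_smul, Matrix.smul_mul]
    rw [h4, Matrix.add_apply, Matrix.smul_apply] at h3
    have h5 : ((U * f) * (V * g)ᵀ) a b = (U * f) a () * (V * g) b () := by
      rw [Matrix.mul_apply]
      simp only [Finset.univ_unique, Finset.sum_singleton]
      rfl
    rw [h5, smul_eq_mul] at h3
    exact h3

lemma aux_comp' {m p : ℕ} (G : SimpleGraph (Fin m)) (H : SimpleGraph (Fin p))
    (hG : G.Connected) (hH : H.Connected) (h1 : m ≤ p + 2) (h2 : p ≤ m + 2) (w : ℝ) (hw : w ≠ 0) :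
    ∃ A C B u v, CompData G H w A C B u v := by
  rcases le_total p m with h | h
  · exact aux_comp G H hG hH h h1 w hw
  · obtain ⟨A, C, B, u, v, hd⟩ := aux_comp H G hH hG h h2 w hw
    exact ⟨C, A, Bᵀ, v, u, hd.swap⟩

lemma aux_orth (ι : Type*) [Fintype ι] [DecidableEq ι] [Nonempty ι] :
    ∃ W : Matrix ι ι ℝ, W * Wᵀ = 1 ∧ Wᵀ * W = 1 ∧ ∀ i j, W i j ≠ 0 := by
  obtain ⟨i0⟩ := ‹Nonempty ι›
  set n := Fintype.card ι with hn
  have hn1 : 1 ≤ n := Fintype.card_pos_iff.2 ⟨i0⟩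
  have hq : (0 : ℝ) < 2 * n - 1 := by
    have : (1 : ℝ) ≤ n := by exact_mod_cast hn1
    linarith
  let t : ι → ℝ := fun i => (if i = i0 then 1 else 2) / (2 * n - 1)
  have ht : ∀ i, 0 < t i := by
    intro i
    simp only [t]
    split_ifs <;> positivity
  have hsum : ∑ i, t i = 1 := by
    simp only [t]
    rw [← Finset.sum_div, div_eq_one_iff_eq hq.ne']
    have : ∀ i, (if i = i0 then (1 : ℝ) else 2) = 2 - if i = i0 then 1 else 0 := by
      intro i; split_ifs <;> norm_num
    simp only [this, Finset.sum_sub_distrib]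
    simp [hn, mul_comm]
  let w : Matrix ι Unit ℝ := Matrix.of fun i _ => Real.sqrt (t i)
  have hww : wᵀ * w = 1 := by
    ext x y
    rw [Matrix.mul_apply]
    simp only [w, transpose_apply, Matrix.of_apply, Real.mul_self_sqrt (ht _).le, hsum]
    simp
  have happ : ∀ i j, (w * wᵀ) i j = Real.sqrt (t i) * Real.sqrt (t j) := by
    intro i j
    rw [Matrix.mul_apply]
    simp [w]
  have hT : (1 - (2 : ℝ) • (w * wᵀ))ᵀ = 1 - (2 : ℝ) • (w * wᵀ) := by
    simp [transpose_mul]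
  have hsq : (1 - (2 : ℝ) • (w * wᵀ)) * (1 - (2 : ℝ) • (w * wᵀ)) = 1 := by
    have h4 : (w * wᵀ) * (w * wᵀ) = w * wᵀ := by
      rw [Matrix.mul_assoc, ← Matrix.mul_assoc wᵀ, hww, Matrix.one_mul]
    simp only [sub_mul, mul_sub, one_mul, mul_one, smul_mul_assoc, mul_smul_comm, h4]
    module
  refine ⟨1 - (2 : ℝ) • (w * wᵀ), by rw [hT, hsq], by rw [hT, hsq], fun i j => ?_⟩
  rw [Matrix.sub_apply, Matrix.smul_apply, happ]
  by_cases hij : i = j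
  · subst hij
    rw [Matrix.one_apply_eq, Real.mul_self_sqrt (ht i).le, smul_eq_mul]
    intro h
    simp only [t] at h
    have h5 : (2 : ℝ) * (if i = i0 then 1 else 2) = 2 * n - 1 := by
      field_simp at h
      linarith
    have h6 : ((2 : ℤ) * (if i = i0 then 1 else 2)) = 2 * n - 1 := by
      have h7 : (((2 : ℤ) * (if i = i0 then 1 else 2) : ℤ) : ℝ) = ((2 * n - 1 : ℤ) : ℝ) := by
        push_cast
        exact h5
      exact_mod_cast h7
    omega
  · rw [Matrix.one_apply_ne hij, zero_sub, neg_ne_zero, smul_eq_mul]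
    have h1 := Real.sqrt_pos.2 (ht i)
    have h2 := Real.sqrt_pos.2 (ht j)
    positivity

lemma aux_two_le {V : Type*} [Fintype V] [DecidableEq V] (A : Matrix V V ℝ) (hA : A.IsSymm)
    (i j : V) (hij : i ≠ j) (h : A i j ≠ 0) : 2 ≤ qMat A := by
  by_contra hlt
  have hH : A.IsHermitian := by
    rw [Matrix.IsHermitian, conjTranspose_eq_transpose_of_trivial]
    exact hA
  have hcard : (specMultiset A).toFinset.card ≤ 1 := by
    unfold qMat at hlt
    omega
  have hmem : ∀ l, hH.eigenvalues l ∈ (specMultiset A).toFinset := by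
    intro l
    rw [Multiset.mem_toFinset, specMultiset, hH.roots_charpoly_eq_eigenvalues]
    exact Multiset.mem_map.2 ⟨l, Finset.mem_univ_val l, rfl⟩
  have hall : ∀ l, hH.eigenvalues l = hH.eigenvalues i := fun l =>
    Finset.card_le_one.1 hcard _ (hmem l) _ (hmem i)
  have hd : diagonal (RCLike.ofReal ∘ hH.eigenvalues : V → ℝ) =
      hH.eigenvalues i • (1 : Matrix V V ℝ) := by
    ext a b
    by_cases hab : a = b
    · subst hab
      simp [hall a]
    · simp [hab]
  have hs := hH.spectral_theorem
  rw [hd, map_smul, map_one] at hs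
  apply h
  rw [hs, Matrix.smul_apply, Matrix.one_apply_ne hij, smul_zero]

lemma aux_le_two {V : Type*} [Fintype V] [DecidableEq V] (A : Matrix V V ℝ)
    (hA : A * A = 1) : qMat A ≤ 2 := by
  have hsub : (specMultiset A).toFinset ⊆ {1, -1} := by
    intro x hx
    rw [Multiset.mem_toFinset, specMultiset] at hx
    have hroot := Polynomial.isRoot_of_mem_roots hx
    rw [Polynomial.IsRoot, Matrix.eval_charpoly] at hroot
    obtain ⟨v, hv, hv0⟩ := Matrix.exists_mulVec_eq_zero_iff.2 hroot
    have h1 : A *ᵥ v = x • v := by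
      rw [Matrix.sub_mulVec, sub_eq_zero] at hv0
      rw [← hv0]
      ext i
      simp [Matrix.scalar_apply, Matrix.mulVec_diagonal]
    have h2 : v = (x * x) • v := by
      have h0 : A *ᵥ (A *ᵥ v) = v := by rw [Matrix.mulVec_mulVec, hA, Matrix.one_mulVec]
      rw [h1, Matrix.mulVec_smul, h1, smul_smul] at h0
      exact h0.symm
    obtain ⟨i, hi⟩ := Function.ne_iff.1 hv
    have h3 := congrFun h2 i
    simp only [Pi.smul_apply, smul_eq_mul] at h3
    have h4 : x * x = 1 := by
      have : (x * x - 1) * v i = 0 := by linarith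
      rcases mul_eq_zero.1 this with h | h
      · linarith
      · exact absurd h hi
    rcases mul_self_eq_one_iff.1 h4 with h | h <;> simp [h]
  exact (Finset.card_le_card hsub).trans Finset.card_le_two

lemma aux_sigma_inS {ι : Type*} [DecidableEq ι] {α : ι → Type*} (G : ∀ i, SimpleGraph (α i))
    (A : ∀ i, Matrix (α i) (α i) ℝ) (h : ∀ i, inS (G i) (A i)) :
    inS (sigmaGraph G) (blockDiagonal' A) := by
  refine ⟨?_, ?_⟩
  · rw [Matrix.IsSymm, blockDiagonal'_transpose]
    congr 1
    funext i
    exact (h i).1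
  · rintro ⟨i, a⟩ ⟨j, b⟩ hne
    by_cases hij : i = j
    · subst hij
      rw [blockDiagonal'_apply_eq]
      have hab : a ≠ b := fun h => hne (by rw [h])
      rw [(h i).2 a b hab]
      constructor
      · intro hadj
        exact ⟨i, a, b, hadj, rfl, rfl⟩
      · rintro ⟨i', a', b', hadj, h1, h2⟩
        cases h1
        cases h2
        exact hadj
    · rw [blockDiagonal'_apply_ne _ _ _ hij]
      constructor
      · intro h0
        exact absurd rfl h0
      · rintro ⟨i', a', b', hadj, h1, h2⟩
        cases h1
        cases h2
        exact absurd rfl hij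

lemma aux_join_inS {α β : Type*} (G : SimpleGraph α) (H : SimpleGraph β)
    (A : Matrix α α ℝ) (C : Matrix β β ℝ) (B : Matrix α β ℝ) (hA : inS G A) (hC : inS H C)
    (hB : ∀ a b, B a b ≠ 0) : inS (graphJoin G H) (fromBlocks A B Bᵀ C) := by
  refine ⟨?_, ?_⟩
  · rw [Matrix.IsSymm, fromBlocks_transpose, hA.1, hC.1, transpose_transpose]
  · rintro (a | b) (a' | b') hne
    · have : a ≠ a' := fun h => hne (by rw [h])
      rw [fromBlocks_apply₁₁, hA.2 a a' this]
      simp [graphJoin, partialJoin]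
    · simp [graphJoin, partialJoin, hB]
    · simp [graphJoin, partialJoin, hB]
    · have : b ≠ b' := fun h => hne (by rw [h])
      rw [fromBlocks_apply₂₂, hC.2 b b' this]
      simp [graphJoin, partialJoin]

/-- Theorem 3.4, first part: if `G_i`, `H_i` are connected graphs with
`||G_i| − |H_i|| ≤ 2` for each `i ∈ [k]`, then `q((⋃ G_i) ∨ (⋃ H_i)) = 2`. -/
theorem statement8 (k : ℕ) (hk : 1 ≤ k) (m p : Fin k → ℕ)
    (G : ∀ i, SimpleGraph (Fin (m i))) (H : ∀ i, SimpleGraph (Fin (p i)))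
    (hG : ∀ i, (G i).Connected) (hH : ∀ i, (H i).Connected)
    (hdiff : ∀ i, m i ≤ p i + 2 ∧ p i ≤ m i + 2) :
    qGraph (graphJoin (sigmaGraph G) (sigmaGraph H)) = 2 := by
  classical
  have hk0 : Nonempty (Σ _ : Fin k, Unit) := ⟨⟨⟨0, hk⟩, ()⟩⟩
  obtain ⟨W, hW1, hW2, hW0⟩ := aux_orth (Σ _ : Fin k, Unit)
  have hcomp := fun i => aux_comp' (G i) (H i) (hG i) (hH i) (hdiff i).1 (hdiff i).2
    (W ⟨i, ()⟩ ⟨i, ()⟩) (hW0 _ _)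
  choose A C B u v hd using hcomp
  unfold CompData at hd
  choose hA hC hu hv huu hvv hAu hCv hBv hBu hAA hCC hAB hnz using hd
  set A' := blockDiagonal' A with hA'
  set C' := blockDiagonal' C with hC'
  set B' := blockDiagonal' B with hB'
  set u' := blockDiagonal' u with hu'
  set v' := blockDiagonal' v with hv'
  have iA : inS (sigmaGraph G) A' := aux_sigma_inS G A hA
  have iC : inS (sigmaGraph H) C' := aux_sigma_inS H C hC
  have euu : u'ᵀ * u' = 1 := by
    rw [hu', blockDiagonal'_transpose, ← blockDiagonal'_mul]
    simp only [huu]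
    exact blockDiagonal'_one
  have evv : v'ᵀ * v' = 1 := by
    rw [hv', blockDiagonal'_transpose, ← blockDiagonal'_mul]
    simp only [hvv]
    exact blockDiagonal'_one
  have eAu : A' * u' = 0 := by
    rw [hu', hA', ← blockDiagonal'_mul]
    simp only [hAu]
    exact blockDiagonal'_zero
  have eCv : C' * v' = 0 := by
    rw [hv', hC', ← blockDiagonal'_mul]
    simp only [hCv]
    exact blockDiagonal'_zero
  have eBv : B' * v' = 0 := by
    rw [hv', hB', ← blockDiagonal'_mul]
    simp only [hBv]
    exact blockDiagonal'_zero
  have eBu : B'ᵀ * u' = 0 := by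
    rw [hu', hB', blockDiagonal'_transpose, ← blockDiagonal'_mul]
    simp only [hBu]
    exact blockDiagonal'_zero
  have eAA : A' * A' + B' * B'ᵀ + u' * u'ᵀ = 1 := by
    rw [hu', hB', hA', blockDiagonal'_transpose, blockDiagonal'_transpose, ← blockDiagonal'_mul,
      ← blockDiagonal'_mul, ← blockDiagonal'_mul, ← blockDiagonal'_add, ← blockDiagonal'_add,
      ← blockDiagonal'_one]
    congr 1
    funext i
    exact hAA i
  have eCC : C' * C' + B'ᵀ * B' + v' * v'ᵀ = 1 := by
    rw [hv', hB', hC', blockDiagonal'_transpose, blockDiagonal'_transpose, ← blockDiagonal'_mul,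
      ← blockDiagonal'_mul, ← blockDiagonal'_mul, ← blockDiagonal'_add, ← blockDiagonal'_add,
      ← blockDiagonal'_one]
    congr 1
    funext i
    exact hCC i
  have eAB : A' * B' + B' * C' = 0 := by
    rw [hB', hC', hA', ← blockDiagonal'_mul, ← blockDiagonal'_mul, ← blockDiagonal'_add,
      ← blockDiagonal'_zero]
    congr 1
    funext i
    exact hAB i
  set K := B' + u' * (W * v'ᵀ) with hK
  have hKt : Kᵀ = B'ᵀ + v' * (Wᵀ * u'ᵀ) := by
    rw [hK]
    simp only [transpose_add, transpose_mul, transpose_transpose, Matrix.mul_assoc]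
  have eAs : A'ᵀ = A' := iA.1
  have eCs : C'ᵀ = C' := iC.1
  have evB : v'ᵀ * B'ᵀ = 0 := by rw [← transpose_mul, eBv, transpose_zero]
  have euB : u'ᵀ * B' = 0 := by
    rw [← transpose_transpose B', ← transpose_mul, eBu, transpose_zero]
  have evC : v'ᵀ * C' = 0 := by rw [← eCs, ← transpose_mul, eCv, transpose_zero]
  have hKK : K * Kᵀ = B' * B'ᵀ + u' * u'ᵀ := by
    rw [hKt, hK, Matrix.add_mul, Matrix.mul_add, Matrix.mul_add]
    have h1 : B' * (v' * (Wᵀ * u'ᵀ)) = 0 := by rw [← Matrix.mul_assoc, eBv, Matrix.zero_mul]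
    have h2 : u' * (W * v'ᵀ) * B'ᵀ = 0 := by
      rw [Matrix.mul_assoc, Matrix.mul_assoc, evB, Matrix.mul_zero, Matrix.mul_zero]
    have h3 : u' * (W * v'ᵀ) * (v' * (Wᵀ * u'ᵀ)) = u' * u'ᵀ := by
      rw [Matrix.mul_assoc, Matrix.mul_assoc, ← Matrix.mul_assoc v'ᵀ, evv, Matrix.one_mul,
        ← Matrix.mul_assoc W, hW1, Matrix.one_mul]
    rw [h1, h2, h3, add_zero, zero_add]
  have hKK' : Kᵀ * K = B'ᵀ * B' + v' * v'ᵀ := by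
    rw [hKt, hK, Matrix.add_mul, Matrix.mul_add, Matrix.mul_add]
    have h1 : B'ᵀ * (u' * (W * v'ᵀ)) = 0 := by rw [← Matrix.mul_assoc, eBu, Matrix.zero_mul]
    have h2 : v' * (Wᵀ * u'ᵀ) * B' = 0 := by
      rw [Matrix.mul_assoc, Matrix.mul_assoc, euB, Matrix.mul_zero, Matrix.mul_zero]
    have h3 : v' * (Wᵀ * u'ᵀ) * (u' * (W * v'ᵀ)) = v' * v'ᵀ := by
      rw [Matrix.mul_assoc, Matrix.mul_assoc, ← Matrix.mul_assoc u'ᵀ, euu, Matrix.one_mul,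
        ← Matrix.mul_assoc Wᵀ, hW2, Matrix.one_mul]
    rw [h1, h2, h3, add_zero, zero_add]
  have hAK : A' * K + K * C' = 0 := by
    rw [hK, Matrix.mul_add, Matrix.add_mul, ← Matrix.mul_assoc A' u', eAu, Matrix.zero_mul,
      Matrix.mul_assoc u', Matrix.mul_assoc W, evC, Matrix.mul_zero, Matrix.mul_zero, add_zero,
      add_zero, eAB]
  have hKA : Kᵀ * A' + C' * Kᵀ = 0 := by
    have := congrArg Matrix.transpose hAK
    rwa [transpose_add, transpose_mul, transpose_mul, eAs, eCs, transpose_zero] at this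
  have hKnz : ∀ x y, K x y ≠ 0 := by
    rintro ⟨i, a⟩ ⟨j, b⟩
    have hent : (u' * (W * v'ᵀ)) ⟨i, a⟩ ⟨j, b⟩ =
        W ⟨i, ()⟩ ⟨j, ()⟩ * (u i a () * v j b ()) := by
      rw [Matrix.mul_apply, Finset.sum_eq_single (⟨i, ()⟩ : Σ _ : Fin k, Unit)]
      · rw [Matrix.mul_apply, Finset.sum_eq_single (⟨j, ()⟩ : Σ _ : Fin k, Unit)]
        · rw [transpose_apply, hu', hv', blockDiagonal'_apply_eq, blockDiagonal'_apply_eq]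
          ring
        · rintro ⟨l, ⟨⟩⟩ _ hl
          have : j ≠ l := by
            rintro rfl
            exact hl rfl
          rw [transpose_apply, hv', blockDiagonal'_apply_ne _ _ _ this, mul_zero]
        · simp
      · rintro ⟨l, ⟨⟩⟩ _ hl
        have : i ≠ l := by
          rintro rfl
          exact hl rfl
        rw [hu', blockDiagonal'_apply_ne _ _ _ this, zero_mul]
      · simp
    rw [hK, Matrix.add_apply, hent]
    by_cases hij : i = j
    · subst hij
      rw [hB', blockDiagonal'_apply_eq]
      exact hnz i a b
    · rw [hB', blockDiagonal'_apply_ne _ _ _ hij, zero_add]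
      exact mul_ne_zero (hW0 _ _) (mul_ne_zero (hu _ _) (hv _ _))
  have hMM : fromBlocks A' K Kᵀ C' * fromBlocks A' K Kᵀ C' = 1 := by
    rw [fromBlocks_multiply, ← fromBlocks_one, hAK, hKA, hKK, hKK', ← add_assoc, eAA,
      add_comm _ (C' * C'), ← add_assoc, eCC]
  have hM : inS (graphJoin (sigmaGraph G) (sigmaGraph H)) (fromBlocks A' K Kᵀ C') :=
    aux_join_inS _ _ _ _ _ iA iC hKnz
  have hlow : ∀ X, inS (graphJoin (sigmaGraph G) (sigmaGraph H)) X → 2 ≤ qMat X := by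
    intro X hX
    obtain ⟨a⟩ := (hG ⟨0, hk⟩).nonempty
    obtain ⟨b⟩ := (hH ⟨0, hk⟩).nonempty
    refine aux_two_le X hX.1 (Sum.inl ⟨⟨0, hk⟩, a⟩) (Sum.inr ⟨⟨0, hk⟩, b⟩) Sum.inl_ne_inr ?_
    rw [hX.2 _ _ Sum.inl_ne_inr]
    exact Or.inr (Or.inr (Or.inl ⟨_, Set.mem_univ _, _, rfl, rfl⟩))
  have hq2 : qMat (fromBlocks A' K Kᵀ C') = 2 :=
    le_antisymm (aux_le_two _ hMM) (hlow _ hM)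
  unfold qGraph
  refine le_antisymm (Nat.sInf_le ⟨_, hM, hq2⟩) (le_csInf ⟨_, _, hM, hq2⟩ ?_)
  rintro q ⟨X, hX, rfl⟩
  exact hlow X hX
end

section
/- Let G be a simple graph, let V(G) = V₁ ∪ V₂ be a partition of its vertex set, and let X ⊆ V₁ be the vertex boundary of V₂ in G. Let H be a connected graph with |H| ≥ |V₂|, and let G' := (G[V₁], X) ∨ H be the partial join obtained from the disjoint union of the induced subgraph G[V₁] and H by joining every vertex of X to every vertex of H. Let M ∈ S(G), and suppose σ' is a multiset of |H| − |V₂| real numbers such that the multiset σ(M[V₂]) ∪ σ' is generically realisable for H, where M[V₂] is the principal submatrix of M on the rows and columns indexed by V₂. Then there exists a matrix N ∈ S(G') with spectrum σ(N) = σ(M) ∪ σ' (as multisets). -/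
open Matrix Filter

theorem exists_equiv_of_map_eq {ι κ : Type*} [Fintype ι] [Fintype κ] (f : ι → ℝ) (g : κ → ℝ)
    (hfg : Multiset.map f Finset.univ.val = Multiset.map g Finset.univ.val) :
    ∃ e : ι ≃ κ, ∀ i, g (e i) = f i := by
  classical
  have hc : ∀ c : ℝ, Fintype.card {i // f i = c} = Fintype.card {i // g i = c} := by
    intro c
    have := congrArg (Multiset.count c) hfg
    rw [Multiset.count_map, Multiset.count_map] at this
    rw [Fintype.card_subtype, Fintype.card_subtype, Finset.card_def, Finset.card_def,
      Finset.filter_val, Finset.filter_val]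
    simpa only [eq_comm] using this
  exact ⟨Equiv.ofFiberEquiv (fun c => Fintype.equivOfCardEq (hc c)),
    fun i => Equiv.ofFiberEquiv_map _ i⟩

theorem exists_orth_diag {β : Type*} [Fintype β] [DecidableEq β] (C : Matrix β β ℝ)
    (hC : C.IsSymm) : ∃ (Q : Matrix β β ℝ) (l : β → ℝ), Qᵀ * Q = 1 ∧
      C = Q * Matrix.diagonal l * Qᵀ ∧ specMultiset C = Multiset.map l Finset.univ.val := by
  have hC' : C.IsHermitian := by
    rw [Matrix.IsHermitian, Matrix.conjTranspose_eq_transpose_of_trivial]; exact hC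
  refine ⟨hC'.eigenvectorUnitary, hC'.eigenvalues, ?_, ?_, ?_⟩
  · have := Unitary.coe_star_mul_self hC'.eigenvectorUnitary
    rwa [Matrix.star_eq_conjTranspose, Matrix.conjTranspose_eq_transpose_of_trivial] at this
  · have := hC'.spectral_theorem
    rw [Unitary.conjStarAlgAut_apply] at this
    conv_lhs => rw [this]
    rw [Matrix.star_eq_conjTranspose, Matrix.conjTranspose_eq_transpose_of_trivial]
    rfl
  · exact hC'.roots_charpoly_eq_eigenvalues

theorem charpoly_conj_orth {β : Type*} [Fintype β] [DecidableEq β] (S T : Matrix β β ℝ)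
    (hS : Sᵀ * S = 1) : (S * T * Sᵀ).charpoly = T.charpoly := by
  rw [Matrix.charpoly_mul_comm, ← mul_assoc, hS, one_mul]

theorem charpoly_block_conj {α β : Type*} [Fintype α] [DecidableEq α] [Fintype β] [DecidableEq β]
    (A : Matrix α α ℝ) (P : Matrix α β ℝ) (D U : Matrix β β ℝ) (hU : Uᵀ * U = 1) :
    (Matrix.fromBlocks A (P * Uᵀ) (U * Pᵀ) (U * D * Uᵀ)).charpoly =
      (Matrix.fromBlocks A P Pᵀ D).charpoly := by
  rw [← charpoly_conj_orth (Matrix.fromBlocks 1 0 0 U) (Matrix.fromBlocks A P Pᵀ D)]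
  · simp [Matrix.fromBlocks_multiply, Matrix.fromBlocks_transpose]
  · simp [Matrix.fromBlocks_multiply, Matrix.fromBlocks_transpose, hU]

theorem charpoly_pad {α β η κ : Type*} [Fintype α] [DecidableEq α] [Fintype β] [DecidableEq β]
    [Fintype η] [DecidableEq η] [Fintype κ] [DecidableEq κ]
    (A : Matrix α α ℝ) (P : Matrix α β ℝ) (l : β → ℝ) (s : κ → ℝ) (e : η ≃ β ⊕ κ) :
    (Matrix.fromBlocks A ((Matrix.fromCols P (0 : Matrix α κ ℝ)).submatrix id e)
      ((Matrix.fromCols P (0 : Matrix α κ ℝ)).submatrix id e)ᵀ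
      (Matrix.diagonal (fun i => Sum.elim l s (e i)))).charpoly =
    (Matrix.fromBlocks A P Pᵀ (Matrix.diagonal l)).charpoly * (Matrix.diagonal s).charpoly := by
  rw [← Matrix.charpoly_fromBlocks_zero₁₂ (M₂₁ := 0),
    ← Matrix.charpoly_reindex
      (((Equiv.refl α).sumCongr e).trans (Equiv.sumAssoc α β κ).symm)]
  congr 1
  ext i j
  rcases i with (i | i) | i <;> rcases j with (j | j) | j <;>
    simp [Matrix.diagonal_apply]

theorem specMultiset_diagonal {κ : Type*} [Fintype κ] [DecidableEq κ] (s : κ → ℝ) :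
    (Matrix.diagonal s).charpoly.roots = Multiset.map s Finset.univ.val := by
  rw [Matrix.charpoly_diagonal, Polynomial.roots_prod]
  · simp
  · simp [Finset.prod_ne_zero_iff, Polynomial.X_sub_C_ne_zero]

theorem partialJoin_ll {α β : Type*} (G₁ : SimpleGraph α) (X : Set α) (G₂ : SimpleGraph β)
    (a b : α) : (partialJoin G₁ X G₂).Adj (Sum.inl a) (Sum.inl b) ↔ G₁.Adj a b := by
  simp [partialJoin]

theorem partialJoin_lr {α β : Type*} (G₁ : SimpleGraph α) (X : Set α) (G₂ : SimpleGraph β)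
    (a : α) (b : β) : (partialJoin G₁ X G₂).Adj (Sum.inl a) (Sum.inr b) ↔ a ∈ X := by
  simp [partialJoin]

theorem partialJoin_rl {α β : Type*} (G₁ : SimpleGraph α) (X : Set α) (G₂ : SimpleGraph β)
    (a : α) (b : β) : (partialJoin G₁ X G₂).Adj (Sum.inr b) (Sum.inl a) ↔ a ∈ X := by
  simp [partialJoin]

theorem core {α β η : Type*} [Fintype α] [DecidableEq α] [Fintype β] [DecidableEq β]
    [Fintype η] [DecidableEq η] (H : SimpleGraph η)
    (A : Matrix α α ℝ) (B : Matrix α β ℝ) (C : Matrix β β ℝ) (hC : C.IsSymm) (τ : Multiset ℝ)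
    (hgen : GenericallyRealisable H (specMultiset C + τ)) :
    ∃ (W : Matrix α η ℝ) (E : Matrix η η ℝ), inS H E ∧
      (∀ a, (∃ b, B a b ≠ 0) → ∀ i, W a i ≠ 0) ∧
      (∀ a, (∀ b, B a b = 0) → ∀ i, W a i = 0) ∧
      specMultiset (Matrix.fromBlocks A W Wᵀ E) =
        specMultiset (Matrix.fromBlocks A B Bᵀ C) + τ := by
  classical
  obtain ⟨Q, l, hQ, hCQ, hspec⟩ := exists_orth_diag C hC
  have hQ' : Q * Qᵀ = 1 := mul_eq_one_comm.mp hQ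
  let s : τ → ℝ := fun x => x.1
  have hs : Multiset.map s Finset.univ.val = τ := Multiset.map_univ_coe τ
  let P : (η ≃ β ⊕ τ) → Matrix α η ℝ := fun e =>
    (Matrix.fromCols (B * Q) (0 : Matrix α τ ℝ)).submatrix id e
  let Y : Finset (η → ℝ) :=
    ((Finset.univ : Finset ((η ≃ β ⊕ τ) × α)).image (fun p => P p.1 p.2)).filter (fun y => y ≠ 0)
  obtain ⟨d, U, hd, hU, hE, hY⟩ := hgen Y (fun y hy => (Finset.mem_filter.mp hy).2)
  have hd' : Multiset.map d Finset.univ.val =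
      Multiset.map (Sum.elim l s) (Finset.univ : Finset (β ⊕ τ)).val := by
    rw [hd, hspec, ← Finset.univ_disjSum_univ, Finset.val_disjSum, Multiset.disjSum,
      Multiset.map_add, Multiset.map_map, Multiset.map_map]
    simp [Function.comp_def, hs]
  obtain ⟨e, he⟩ := exists_equiv_of_map_eq _ _ hd'
  have hde : d = fun i => Sum.elim l s (e i) := funext fun i => (he i).symm
  have hW : ∀ a i, (P e * Uᵀ) a i = U.mulVec (P e a) i := by
    intro a i
    simp [Matrix.mul_apply, Matrix.mulVec, dotProduct, mul_comm]
  have hBQ : ∀ a, (B * Q) a = Matrix.vecMul (B a) Q := fun a => rfl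
  refine ⟨P e * Uᵀ, U * Matrix.diagonal d * Uᵀ, hE, ?_, ?_, ?_⟩
  · rintro a ⟨b, hb⟩ i
    rw [hW]
    refine hY _ (Finset.mem_filter.mpr ⟨Finset.mem_image.mpr ⟨(e, a), Finset.mem_univ _, rfl⟩, ?_⟩) i
    intro h0
    apply hb
    have h1 : (B * Q) a = 0 := by
      funext j
      have := congrFun h0 (e.symm (Sum.inl j))
      simpa [P] using this
    have h2 : Matrix.vecMul (Matrix.vecMul (B a) Q) Qᵀ = B a := by
      rw [Matrix.vecMul_vecMul, hQ', Matrix.vecMul_one]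
    rw [← hBQ, h1, Matrix.zero_vecMul] at h2
    exact (congrFun h2 b).symm
  · intro a ha i
    rw [hW]
    have h1 : P e a = 0 := by
      funext j
      have hz : ∀ b, (B * Q) a b = 0 := fun b => by simp [Matrix.mul_apply, ha]
      rcases hj : e j with b | t
      · simp [P, hj, hz]
      · simp [P, hj]
    rw [h1, Matrix.mulVec_zero]; rfl
  · unfold specMultiset
    have hT : (P e * Uᵀ)ᵀ = U * (P e)ᵀ := by rw [Matrix.transpose_mul, Matrix.transpose_transpose]
    have hM : (Matrix.fromBlocks A B Bᵀ C).charpoly =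
        (Matrix.fromBlocks A (B * Q) (B * Q)ᵀ (Matrix.diagonal l)).charpoly := by
      rw [← charpoly_block_conj A (B * Q) (Matrix.diagonal l) Q hQ, ← hCQ, Matrix.transpose_mul,
        Matrix.mul_assoc, hQ', ← Matrix.mul_assoc Q, hQ', Matrix.mul_one, Matrix.one_mul]
    rw [hT, charpoly_block_conj _ _ _ _ hU, hde, charpoly_pad, hM, Polynomial.roots_mul,
      specMultiset_diagonal, hs]
    exact mul_ne_zero (Matrix.charpoly_monic _).ne_zero (Matrix.charpoly_monic _).ne_zero

/-- Lemma 3.7: let `V(G) = V₁ ∪ V₂` (with `V₁ = V₂ᶜ`), `X ⊆ V₁` the vertex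
boundary of `V₂` in `G`, `H` connected with `|H| ≥ |V₂|` and `G' = (G[V₁], X) ∨ H`. If
`M ∈ S(G)` and `σ'` is a multiset of `|H| − |V₂|` reals with `σ(M[V₂]) ∪ σ'` generically
realisable for `H`, then some `N ∈ S(G')` has spectrum `σ(M) ∪ σ'`. -/
theorem statement12 (n h : ℕ) (G : SimpleGraph (Fin n)) (V₂ : Finset (Fin n))
    (H : SimpleGraph (Fin h)) (hH : H.Connected) (hsize : V₂.card ≤ h)
    (M : Matrix (Fin n) (Fin n) ℝ) (hM : inS G M)
    (σ' : Multiset ℝ) (hcard : Multiset.card σ' = h - V₂.card)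
    (hgen : GenericallyRealisable H
      (specMultiset (M.submatrix (fun a : {x : Fin n // x ∈ V₂} => (a : Fin n))
        (fun a : {x : Fin n // x ∈ V₂} => (a : Fin n))) + σ')) :
    ∃ N : Matrix ((↑(V₂ᶜ : Finset (Fin n)) : Set (Fin n)) ⊕ Fin h)
        ((↑(V₂ᶜ : Finset (Fin n)) : Set (Fin n)) ⊕ Fin h) ℝ,
      inS (partialJoin (G.induce (↑(V₂ᶜ : Finset (Fin n)) : Set (Fin n)))
        {a : (↑(V₂ᶜ : Finset (Fin n)) : Set (Fin n)) | ∃ w ∈ V₂, G.Adj ↑a w} H) N ∧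
      specMultiset N = specMultiset M + σ' := by
  have hsym : ∀ i j, M i j = M j i := fun i j => hM.1.apply j i
  let f : (↑(V₂ᶜ : Finset (Fin n)) : Set (Fin n)) → Fin n := Subtype.val
  let g : {x : Fin n // x ∈ V₂} → Fin n := Subtype.val
  have hbij : Function.Bijective (Sum.elim f g) := by
    constructor
    · rintro (⟨x, hx⟩ | ⟨x, hx⟩) (⟨y, hy⟩ | ⟨y, hy⟩) hxy <;> simp [f, g] at hxy hx hy <;>
        subst hxy <;> first | rfl | contradiction
    · intro x
      by_cases hx : x ∈ V₂
      · exact ⟨Sum.inr ⟨x, hx⟩, rfl⟩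
      · exact ⟨Sum.inl ⟨x, by simpa using hx⟩, rfl⟩
  let e := Equiv.ofBijective _ hbij
  have hMe : specMultiset (Matrix.fromBlocks (M.submatrix f f) (M.submatrix f g)
      (M.submatrix f g)ᵀ (M.submatrix g g)) = specMultiset M := by
    unfold specMultiset
    rw [← Matrix.charpoly_reindex e]
    congr 2
    ext i j
    obtain ⟨i, rfl⟩ := e.surjective i
    obtain ⟨j, rfl⟩ := e.surjective j
    rw [Matrix.reindex_apply, Matrix.submatrix_apply, Equiv.symm_apply_apply,
      Equiv.symm_apply_apply]
    rcases i with i | i <;> rcases j with j | j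
    · rfl
    · rfl
    · exact hsym _ _
    · rfl
  obtain ⟨W, E, hE, hW1, hW2, hsp⟩ := core H (M.submatrix f f) (M.submatrix f g)
    (M.submatrix g g) (hM.1.submatrix g) σ' hgen
  have hne : ∀ (a : (↑(V₂ᶜ : Finset (Fin n)) : Set (Fin n))) (b : {x : Fin n // x ∈ V₂}),
      f a ≠ g b := by
    intro a b hab
    have h1 := a.2
    have h2 : f a ∈ V₂ := hab ▸ b.2
    simp at h1
    exact h1 h2
  have hWX : ∀ a i, W a i ≠ 0 ↔ ∃ w ∈ V₂, G.Adj (a : Fin n) w := by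
    intro a i
    constructor
    · intro hw
      by_contra hcon
      refine hw (hW2 a (fun b => ?_) i)
      by_contra hb
      exact hcon ⟨g b, b.2, (hM.2 _ _ (hne a b)).mp hb⟩
    · rintro ⟨w, hw, haw⟩
      exact hW1 a ⟨⟨w, hw⟩, (hM.2 _ _ (hne a ⟨w, hw⟩)).mpr haw⟩ i
  refine ⟨Matrix.fromBlocks (M.submatrix f f) W Wᵀ E, ⟨?_, ?_⟩, ?_⟩
  · exact Matrix.IsSymm.fromBlocks (hM.1.submatrix f) rfl hE.1
  · rintro (i | i) (j | j) hij
    · have hij' : f i ≠ f j := fun h' => hij (congrArg Sum.inl (Subtype.ext h'))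
      have := hM.2 _ _ hij'
      rw [partialJoin_ll]; exact this
    · rw [partialJoin_lr]; exact (hWX i j)
    · rw [partialJoin_rl]; exact (hWX j i)
    · have := hE.2 i j (fun h' => hij (congrArg Sum.inr h'))
      simpa [partialJoin] using this
  · rw [← hMe, ← hsp]
end

section
/- Let G be a simple graph, let V(G) = V₁ ∪ V₂ be a partition of its vertex set, and let X ⊆ V₁ be the vertex boundary of V₂ in G. Let H be a connected graph with |H| ≥ |V₂|, and let G' := (G[V₁], X) ∨ H. Suppose there exists M ∈ S(G) such that the principal submatrix M[V₂] has distinct eigenvalues λ₁,…,λ_{|V₂|}. Let t = |H| − |V₂| and let μ₁,…,μ_t be any distinct real numbers with μ_i ≠ λ_j for all i ∈ {1,…,t} and j ∈ {1,…,|V₂|}. Then there exists N ∈ S(G') with spectrum σ(N) = σ(M) ∪ {μ₁,…,μ_t} (as multisets). -/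
open Matrix Filter

open Topology

set_option linter.unusedSectionVars false

section Generic
variable {V : Type*} [Fintype V] [LinearOrder V]

/-- Entries of `W Λ Wᵀ`. -/
noncomputable def Cd (l : V → ℝ) (W : V → V → ℝ) (i j : V) : ℝ := ∑ p, l p * (W i p * W j p)

/-- The combined polynomial map recording `W Wᵀ` and `W Λ Wᵀ`. -/
noncomputable def Fm (l : V → ℝ) (W : V → V → ℝ) : V → V → ℝ :=
  fun i j => ∑ p, (if i ≤ j then 1 else l p) * (W i p * W j p)

/-- Row orthonormality. -/
def Orth (W : V → V → ℝ) : Prop := ∀ i j, ∑ p, W i p * W j p = if i = j then 1 else 0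

lemma Fm_contDiff (l : V → ℝ) : ContDiff ℝ 1 (Fm l) := by
  unfold Fm
  fun_prop

lemma continuous_Cd (l : V → ℝ) (i j : V) : Continuous (fun W : V → V → ℝ => Cd l W i j) := by
  unfold Cd
  fun_prop

lemma Cd_symm (l : V → ℝ) (W : V → V → ℝ) (i j : V) : Cd l W i j = Cd l W j i := by
  unfold Cd
  exact Finset.sum_congr rfl fun p _ => by ring

lemma nondeg_open (l : V → ℝ) (W₀ : V → V → ℝ) (h : (fderiv ℝ (Fm l) W₀).det ≠ 0) :
    ∀ᶠ W in 𝓝 W₀, (fderiv ℝ (Fm l) W).det ≠ 0 := by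
  have hc : Continuous (fun W => (fderiv ℝ (Fm l) W).det) :=
    ContinuousLinearMap.continuous_det.comp ((Fm_contDiff l).continuous_fderiv (by norm_num))
  exact hc.continuousAt.eventually_ne h

lemma perturb (l : V → ℝ) (W₀ : V → V → ℝ) (h : (fderiv ℝ (Fm l) W₀).det ≠ 0)
    (ho : Orth W₀) (E : V → V → ℝ) (hE : ∀ i j, E i j = E j i) (P : (V → V → ℝ) → Prop)
    (hP : ∀ᶠ W in 𝓝 W₀, P W) :
    ∀ᶠ ε : ℝ in 𝓝 0, ∃ W, P W ∧ Orth W ∧ ∀ i j, i ≠ j → Cd l W i j = Cd l W₀ i j + ε * E i j := by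
  have hs : HasStrictFDerivAt (Fm l) (fderiv ℝ (Fm l) W₀) W₀ :=
    (Fm_contDiff l).contDiffAt.hasStrictFDerivAt (by norm_num)
  have hsurj : (fderiv ℝ (Fm l) W₀).range = ⊤ :=
    (LinearMap.isUnit_iff_range_eq_top _).1 ((LinearMap.isUnit_iff_isUnit_det _).2 (Ne.isUnit h))
  have hmap := hs.map_nhds_eq_of_surj hsurj
  have h1 : Fm l '' {W | P W} ∈ 𝓝 (Fm l W₀) := by
    rw [← hmap]
    exact image_mem_map hP
  let T : ℝ → V → V → ℝ := fun ε i j => Fm l W₀ i j + if i ≤ j then 0 else ε * E i j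
  have hT : Continuous T := by
    refine continuous_pi fun i => continuous_pi fun j => ?_
    by_cases hij : i ≤ j
    · simp only [T, hij, if_true]; fun_prop
    · simp only [T, hij, if_false]; fun_prop
  have hT0 : T 0 = Fm l W₀ := by
    funext i j; simp [T]
  have h2 : ∀ᶠ ε in 𝓝 (0:ℝ), T ε ∈ Fm l '' {W | P W} := by
    apply hT.continuousAt.eventually
    rw [hT0]; exact h1
  filter_upwards [h2] with ε hε
  obtain ⟨W, hW, hWT⟩ := hε
  have ho' : ∀ i j, i ≤ j → ∑ p, W i p * W j p = if i = j then 1 else 0 := by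
    intro i j hij
    have := congrFun (congrFun hWT i) j
    simp only [T, Fm, hij, if_true, one_mul, add_zero] at this
    rw [this, ho]
  have hC : ∀ i j, j < i → Cd l W i j = Cd l W₀ i j + ε * E i j := by
    intro i j hij
    have := congrFun (congrFun hWT i) j
    simp only [T, Fm, not_le.2 hij, if_false] at this
    exact this
  refine ⟨W, hW, ?_, ?_⟩
  · intro i j
    rcases le_total i j with hij | hij
    · exact ho' i j hij
    · have := ho' j i hij
      simp only [mul_comm (W i _), this, eq_comm]
  · intro i j hij
    rcases lt_or_gt_of_ne hij with h | h
    · rw [Cd_symm l W, Cd_symm l W₀, hE]; exact hC j i h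
    · exact hC i j h

/-- The identity. -/
def Id1 : V → V → ℝ := fun i j => if i = j then 1 else 0

lemma nondeg_id (l : V → ℝ) (hl : Function.Injective l) :
    (fderiv ℝ (Fm l) (Id1 : V → V → ℝ)).det ≠ 0 := by
  have hf : ∀ D : V → V → ℝ, ∀ i j, fderiv ℝ (Fm l) (Id1 : V → V → ℝ) D i j =
      (if i ≤ j then 1 else l j) * D i j + (if i ≤ j then 1 else l i) * D j i := by
    intro D i j
    have hd : HasFDerivAt (Fm l) (fderiv ℝ (Fm l) (Id1 : V → V → ℝ)) Id1 :=
      (((Fm_contDiff l).differentiable (by norm_num)) _).hasFDerivAt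
    have h1 := hasFDerivAt_pi'.1 (hasFDerivAt_pi'.1 hd i) j
    have h0 : HasDerivAt (fun t : ℝ => (Id1 : V → V → ℝ) + t • D) D 0 := by
      simpa using ((hasDerivAt_id (0:ℝ)).smul_const D).const_add (Id1 : V → V → ℝ)
    have h2 := HasFDerivAt.comp_hasDerivAt_of_eq (0:ℝ) h1 h0 (by simp)
    have h3 : HasDerivAt (fun t : ℝ => ∑ p, (if i ≤ j then 1 else l p) *
        (((Id1 : V → V → ℝ) i p + t * D i p) * ((Id1 : V → V → ℝ) j p + t * D j p)))
        (∑ p, (if i ≤ j then 1 else l p) *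
          (D i p * (Id1 : V → V → ℝ) j p + (Id1 : V → V → ℝ) i p * D j p)) 0 := by
      apply HasDerivAt.fun_sum
      intro p _
      apply HasDerivAt.const_mul
      have a1 : ∀ a b : ℝ, HasDerivAt (fun t : ℝ => a + t * b) b 0 := fun a b => by
        simpa using ((hasDerivAt_id (0:ℝ)).mul_const b).const_add a
      simpa using (a1 (Id1 i p) (D i p)).fun_mul (a1 (Id1 j p) (D j p))
    have h4 := h2.unique h3
    have h5 : fderiv ℝ (Fm l) (Id1 : V → V → ℝ) D i j = _ := h4
    rw [h5]
    simp [Id1, mul_add, Finset.sum_add_distrib]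
  have hinj : Function.Injective (fderiv ℝ (Fm l) (Id1 : V → V → ℝ)).toLinearMap := by
    rw [← LinearMap.ker_eq_bot, LinearMap.ker_eq_bot']
    intro D hD
    have hD' : ∀ i j, (if i ≤ j then 1 else l j) * D i j + (if i ≤ j then 1 else l i) * D j i = 0 := by
      intro i j
      rw [← hf]
      exact congrFun (congrFun hD i) j
    have key : ∀ i j, i < j → D i j = 0 ∧ D j i = 0 := by
      intro i j hij
      have h1 := hD' i j
      have h2 := hD' j i
      simp only [hij.le, not_le.2 hij, if_true, if_false, one_mul] at h1 h2
      have h3 : l i - l j ≠ 0 := sub_ne_zero.2 (hl.ne hij.ne)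
      have h4 : (l i - l j) * D j i = 0 := by linear_combination h2 - l j * h1
      have h5 : D j i = 0 := by simpa [h3] using h4
      exact ⟨by linarith, h5⟩
    funext i j
    rcases lt_trichotomy i j with h | h | h
    · exact (key i j h).1
    · subst h
      have := hD' i i
      simp at this
      show D i i = 0
      linarith
    · exact (key j i h).2
  exact ((LinearMap.isUnit_iff_isUnit_det _).1
    ((LinearMap.isUnit_iff_ker_eq_bot _).2 (LinearMap.ker_eq_bot.2 hinj))).ne_zero

lemma eig (l : V → ℝ) (W : V → V → ℝ) (ho : Orth W) (i p : V) :
    ∑ q, Cd l W i q * W q p = l p * W i p := by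
  have h1 : (Matrix.of W) * (Matrix.of W)ᵀ = 1 := by
    ext i j
    simp [Matrix.mul_apply, ho i j, Matrix.one_apply]
  have h2 : (Matrix.of W)ᵀ * (Matrix.of W) = 1 := mul_eq_one_comm.1 h1
  have h3 : ∀ r, ∑ q, W q r * W q p = if r = p then 1 else 0 := by
    intro r
    have := congrFun (congrFun h2 r) p
    simpa [Matrix.mul_apply, Matrix.one_apply] using this
  unfold Cd
  simp only [Finset.sum_mul]
  rw [Finset.sum_comm]
  have : ∀ r, ∑ q, l r * (W i r * W q r) * W q p = if r = p then l p * W i p else 0 := by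
    intro r
    have : ∑ q, l r * (W i r * W q r) * W q p = l r * W i r * ∑ q, W q r * W q p := by
      rw [Finset.mul_sum]; exact Finset.sum_congr rfl fun q _ => by ring
    rw [this, h3]
    split_ifs with h
    · subst h; ring
    · ring
  simp [this]

/-- Invariant of the inductive construction. -/
structure Good (H : SimpleGraph V) (l : V → ℝ) (Y : Finset (V → ℝ)) (Z : Finset ℝ)
    (S : Finset V) (W : V → V → ℝ) : Prop where
  nd : (fderiv ℝ (Fm l) W).det ≠ 0
  orth : Orth W
  blk : ∀ i j, i ≠ j → (i ∉ S ∨ j ∉ S) → W i j = 0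
  pat : ∀ i j, i ≠ j → Cd l W i j ≠ 0 → H.Adj i j
  gy : ∀ y ∈ Y, (∃ p ∈ S, y p ≠ 0) → ∀ j ∈ S, ∑ p, W j p * y p ≠ 0
  gz : ∀ z ∈ Z, (∀ p ∈ S, l p ≠ z) → ∀ j ∈ S, ∀ k ∈ S, ∑ p, W j p * W k p / (l p - z) ≠ 0

lemma good_base (H : SimpleGraph V) (l : V → ℝ) (hl : Function.Injective l) (Y : Finset (V → ℝ))
    (Z : Finset ℝ) (r : V) : Good H l Y Z {r} Id1 where
  nd := nondeg_id l hl
  orth := by intro i j; simp [Id1]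
  blk := by intro i j hij _; simp [Id1, hij]
  pat := by
    intro i j hij h
    exfalso; apply h
    simp [Cd, Id1, hij]
  gy := by
    intro y _ hy j hj
    simp only [Finset.mem_singleton, exists_eq_left] at hy hj
    subst hj
    simpa [Id1] using hy
  gz := by
    intro z _ hz j hj k hk
    simp only [Finset.mem_singleton, forall_eq] at hz hj hk
    subst hj; subst hk
    simpa [Id1, ite_div] using sub_ne_zero.2 hz

lemma good_step (H : SimpleGraph V) (l : V → ℝ) (hl : Function.Injective l) (S : Finset V)
    (i k : V) (hi : i ∉ S) (hk : k ∈ S) (hik : H.Adj i k) (Y : Finset (V → ℝ)) (Z : Finset ℝ)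
    (hS : ∀ Y Z, ∃ W, Good H l Y Z S W) : ∃ W, Good H l Y Z (insert i S) W := by
  obtain ⟨W₀, g⟩ := hS (Y ∪ Y.image (fun y p => y p / (l p - l i))) (insert (l i) Z)
  have hik' : k ≠ i := fun h => hi (h ▸ hk)
  have hne : ∀ p ∈ S, l p ≠ l i := fun p hp h => hi (hl h ▸ hp)
  have hlp : ∀ p ∈ S, l p - l i ≠ 0 := fun p hp => sub_ne_zero.2 (hne p hp)
  -- facts on W₀
  have hdiag : ∀ q, q ∉ S → W₀ q q * W₀ q q = 1 := by
    intro q hq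
    have := g.orth q q
    rw [Finset.sum_eq_single q (fun p _ hp => by rw [g.blk q p hp.symm (Or.inl hq)]; simp)
      (by simp)] at this
    simpa using this
  have hcii : Cd l W₀ i i = l i := by
    unfold Cd
    rw [Finset.sum_eq_single i (fun p _ hp => by rw [g.blk i p hp.symm (Or.inl hi)]; simp)
      (by simp), hdiag i hi, mul_one]
  have hsumS : ∀ (j : V), j ∈ S → ∀ f : V → ℝ, ∑ p, W₀ j p * f p = ∑ p ∈ S, W₀ j p * f p := by
    intro j hj f
    symm
    apply Finset.sum_subset (Finset.subset_univ _)
    intro p _ hp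
    rw [g.blk j p (fun h => hp (h ▸ hj)) (Or.inr hp), zero_mul]
  have hc : Continuous (fun W : V → V → ℝ => Cd l W i i) := continuous_Cd l i i
  have hdc : ∀ p ∈ S, ContinuousAt (fun W : V → V → ℝ => (l p - Cd l W i i)⁻¹) W₀ := by
    intro p hp
    refine ContinuousAt.inv₀ (by fun_prop) ?_
    rw [hcii]; exact hlp p hp
  have eB : ∀ᶠ W in 𝓝 W₀, ∀ q, q ∉ S → W q q ≠ 0 := by
    rw [eventually_all]; intro q
    by_cases hq : q ∈ S
    · simp [hq]
    have : ContinuousAt (fun W : V → V → ℝ => W q q) W₀ := Continuous.continuousAt (by fun_prop)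
    filter_upwards [this.eventually_ne (y := (0:ℝ)) (fun h => by simpa [h] using hdiag q hq)] with W hW _
      using hW
  have eC : ∀ᶠ W in 𝓝 W₀, ∀ p ∈ S, l p - Cd l W i i ≠ 0 := by
    rw [eventually_all_finset]; intro p hp
    have : ContinuousAt (fun W : V → V → ℝ => l p - Cd l W i i) W₀ := Continuous.continuousAt (by fun_prop)
    exact this.eventually_ne (by rw [hcii]; exact hlp p hp)
  have eD : ∀ᶠ W in 𝓝 W₀, ∀ y ∈ Y, (∃ p ∈ S, y p ≠ 0) → ∀ j ∈ S, ∑ p, W j p * y p ≠ 0 := by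
    rw [eventually_all_finset]; intro y hy
    by_cases h : ∃ p ∈ S, y p ≠ 0
    swap
    · simp [h]
    have : ∀ᶠ W in 𝓝 W₀, ∀ j ∈ S, ∑ p, W j p * y p ≠ 0 := by
      rw [eventually_all_finset]; intro j hj
      have : ContinuousAt (fun W : V → V → ℝ => ∑ p, W j p * y p) W₀ := Continuous.continuousAt (by fun_prop)
      exact this.eventually_ne (g.gy y (Finset.mem_union_left _ hy) h j hj)
    filter_upwards [this] with W hW _ using hW
  have eE : ∀ᶠ W in 𝓝 W₀, ∀ y ∈ Y, y i ≠ 0 → ∑ p, W i p * y p ≠ 0 := by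
    rw [eventually_all_finset]; intro y hy
    by_cases h : y i = 0
    · simp [h]
    have : ContinuousAt (fun W : V → V → ℝ => ∑ p, W i p * y p) W₀ := Continuous.continuousAt (by fun_prop)
    filter_upwards [this.eventually_ne (y := (0:ℝ)) (by
      rw [Finset.sum_eq_single i (fun p _ hp => by rw [g.blk i p hp.symm (Or.inl hi)]; simp)
        (by simp)]
      exact mul_ne_zero (fun h => by simpa [h] using hdiag i hi) h)] with W hW _ using hW
  have eF : ∀ᶠ W in 𝓝 W₀, ∀ y ∈ Y, (∃ p ∈ S, y p ≠ 0) →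
      ∑ p ∈ S, W k p * y p * (l p - Cd l W i i)⁻¹ ≠ 0 := by
    rw [eventually_all_finset]; intro y hy
    by_cases h : ∃ p ∈ S, y p ≠ 0
    swap
    · simp [h]
    have : ContinuousAt (fun W : V → V → ℝ => ∑ p ∈ S, W k p * y p * (l p - Cd l W i i)⁻¹) W₀ := by
      refine tendsto_finsetSum _ fun p hp => ?_
      exact ContinuousAt.mul (Continuous.continuousAt (by fun_prop)) (hdc p hp)
    filter_upwards [this.eventually_ne (y := (0:ℝ)) (by
      have h1 := g.gy (fun p => y p / (l p - l i))
        (Finset.mem_union_right _ (Finset.mem_image_of_mem _ hy))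
        (by obtain ⟨p, hp, h⟩ := h; exact ⟨p, hp, div_ne_zero h (hlp p hp)⟩) k hk
      rw [hsumS k hk] at h1
      rw [hcii]
      convert h1 using 2 with p
      ring)] with W hW _ using hW
  have eG : ∀ᶠ W in 𝓝 W₀, ∀ j ∈ S, ∑ p ∈ S, W j p * W k p * (l p - Cd l W i i)⁻¹ ≠ 0 := by
    rw [eventually_all_finset]; intro j hj
    have : ContinuousAt (fun W : V → V → ℝ => ∑ p ∈ S, W j p * W k p * (l p - Cd l W i i)⁻¹) W₀ := by
      refine tendsto_finsetSum _ fun p hp => ?_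
      exact ContinuousAt.mul (Continuous.continuousAt (by fun_prop)) (hdc p hp)
    refine this.eventually_ne ?_
    have h1 := g.gz (l i) (by simp) hne j hj k hk
    simp only [mul_div_assoc] at h1
    rw [hsumS j hj] at h1
    rw [hcii]
    convert h1 using 2 with p
    ring
  have eH : ∀ᶠ W in 𝓝 W₀, ∀ z ∈ Z, (∀ p ∈ insert i S, l p ≠ z) → ∀ j ∈ S, ∀ m ∈ S,
      ∑ p, W j p * W m p / (l p - z) ≠ 0 := by
    rw [eventually_all_finset]; intro z hz
    by_cases h : ∀ p ∈ insert i S, l p ≠ z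
    swap
    · simp [-Finset.mem_insert, h]
    have : ∀ᶠ W in 𝓝 W₀, ∀ j ∈ S, ∀ m ∈ S, ∑ p, W j p * W m p / (l p - z) ≠ 0 := by
      rw [eventually_all_finset]; intro j hj
      rw [eventually_all_finset]; intro m hm
      have : ContinuousAt (fun W : V → V → ℝ => ∑ p, W j p * W m p / (l p - z)) W₀ :=
        Continuous.continuousAt (by fun_prop)
      exact this.eventually_ne (g.gz z (by simp [hz])
        (fun p hp => h p (Finset.mem_insert_of_mem hp)) j hj m hm)
    filter_upwards [this] with W hW _ using hW
  have eI : ∀ᶠ W in 𝓝 W₀, ∀ z ∈ Z, (∀ p ∈ insert i S, l p ≠ z) →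
      ∑ p, W i p * W i p / (l p - z) ≠ 0 := by
    rw [eventually_all_finset]; intro z hz
    by_cases h : ∀ p ∈ insert i S, l p ≠ z
    swap
    · simp [-Finset.mem_insert, h]
    have : ContinuousAt (fun W : V → V → ℝ => ∑ p, W i p * W i p / (l p - z)) W₀ :=
      Continuous.continuousAt (by fun_prop)
    filter_upwards [this.eventually_ne (y := (0:ℝ)) (by
      rw [Finset.sum_eq_single i (fun p _ hp => by rw [g.blk i p hp.symm (Or.inl hi)]; simp)
        (by simp), hdiag i hi]
      exact div_ne_zero one_ne_zero (sub_ne_zero.2 (h i (by simp))))] with W hW _ using hW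
  have eJ : ∀ᶠ W in 𝓝 W₀, ∀ z ∈ Z, (∀ p ∈ insert i S, l p ≠ z) → ∀ j ∈ S,
      ∑ p ∈ S, W j p * W k p * (1 / (l p - z) - 1 / (l i - z)) * (l p - Cd l W i i)⁻¹ ≠ 0 := by
    rw [eventually_all_finset]; intro z hz
    by_cases h : ∀ p ∈ insert i S, l p ≠ z
    swap
    · simp [-Finset.mem_insert, h]
    have : ∀ᶠ W in 𝓝 W₀, ∀ j ∈ S,
        ∑ p ∈ S, W j p * W k p * (1 / (l p - z) - 1 / (l i - z)) * (l p - Cd l W i i)⁻¹ ≠ 0 := by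
      rw [eventually_all_finset]; intro j hj
      have : ContinuousAt (fun W : V → V → ℝ =>
          ∑ p ∈ S, W j p * W k p * (1 / (l p - z) - 1 / (l i - z)) * (l p - Cd l W i i)⁻¹) W₀ := by
        refine tendsto_finsetSum _ fun p hp => ?_
        exact ContinuousAt.mul (Continuous.continuousAt (by fun_prop)) (hdc p hp)
      refine this.eventually_ne ?_
      have h1 := g.gz z (by simp [hz]) (fun p hp => h p (Finset.mem_insert_of_mem hp)) j hj k hk
      simp only [mul_div_assoc] at h1
      rw [hsumS j hj] at h1
      have hiz : l i - z ≠ 0 := sub_ne_zero.2 (h i (by simp))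
      rw [hcii]
      have h2 : ∑ p ∈ S, W₀ j p * W₀ k p * (1 / (l p - z) - 1 / (l i - z)) * (l p - l i)⁻¹
          = (- 1 / (l i - z)) * ∑ p ∈ S, W₀ j p * (W₀ k p / (l p - z)) := by
        rw [Finset.mul_sum]
        refine Finset.sum_congr rfl fun p hp => ?_
        have a1 := hlp p hp
        have a2 : l p - z ≠ 0 := sub_ne_zero.2 (h p (Finset.mem_insert_of_mem hp))
        field_simp
        ring
      rw [h2]
      exact mul_ne_zero (div_ne_zero (by norm_num) hiz) h1
    filter_upwards [this] with W hW _ using hW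
  -- perturbation
  let E : V → V → ℝ := fun a b => if (a = i ∧ b = k) ∨ (a = k ∧ b = i) then 1 else 0
  have hE : ∀ a b, E a b = E b a := by
    intro a b; simp only [E]; congr 1; apply propext; tauto
  have hev := perturb l W₀ g.nd g.orth E hE _
    ((nondeg_open l W₀ g.nd).and (eB.and (eC.and (eD.and (eE.and (eF.and (eG.and (eH.and
      (eI.and eJ)))))))))
  obtain ⟨ε, ⟨W, ⟨hA, hB, hC, hD, hEE, hF, hG, hH, hI, hJ⟩, ho, hCd⟩, hε⟩ :=
    ((hev.filter_mono nhdsWithin_le_nhds).and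
      (self_mem_nhdsWithin : {x : ℝ | x ≠ 0} ∈ 𝓝[≠] (0:ℝ))).exists
  replace hε : ε ≠ 0 := hε
  have hCd0 : ∀ q b, q ∉ S → b ≠ q → Cd l W₀ q b = 0 := by
    intro q b hq hb
    unfold Cd
    refine Finset.sum_eq_zero fun p _ => ?_
    by_cases hpq : p = q
    · subst hpq; rw [g.blk b p hb (Or.inr hq)]; simp
    · rw [g.blk q p (Ne.symm hpq) (Or.inl hq)]; simp
  -- rows outside
  have hrow : ∀ q, q ∉ insert i S → ∀ p, p ≠ q → W q p = 0 := by
    intro q hq p hp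
    have hqi : q ≠ i := fun h => hq (by simp [h])
    have hqS : q ∉ S := fun h => hq (by simp [h])
    have hqk : q ≠ k := fun h => hqS (h ▸ hk)
    have hz : ∀ b, b ≠ q → Cd l W q b = 0 := by
      intro b hb
      rw [hCd q b hb.symm, hCd0 q b hqS hb]
      simp [E, hqi, hqk]
    have he : ∀ r, Cd l W q q * W q r = l r * W q r := by
      intro r
      rw [← eig l W ho q r]
      rw [Finset.sum_eq_single q (fun b _ hb => by rw [hz b hb]; simp) (by simp)]
    have h1 : Cd l W q q = l q := mul_right_cancel₀ (hB q hqS) (he q)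
    have h2 := he p
    rw [h1] at h2
    have h3 : (l q - l p) * W q p = 0 := by linear_combination h2
    rcases mul_eq_zero.1 h3 with h | h
    · exact absurd (hl (sub_eq_zero.1 h)).symm hp
    · exact h
  have hcol : ∀ q, q ∉ insert i S → ∀ p, p ≠ q → W p q = 0 := by
    intro q hq p hp
    have hqS : q ∉ S := fun h => hq (by simp [h])
    have h1 := ho p q
    rw [Finset.sum_eq_single q (fun b _ hb => by rw [hrow q hq b hb]; simp) (by simp),
      if_neg hp] at h1
    exact (mul_eq_zero.1 h1).resolve_right (hB q hqS)
  have hsum : ∀ j ∈ insert i S, ∀ f : V → ℝ,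
      ∑ p, W j p * f p = W j i * f i + ∑ p ∈ S, W j p * f p := by
    intro j hj f
    rw [← Finset.sum_insert (f := fun p => W j p * f p) hi]
    symm
    apply Finset.sum_subset (Finset.subset_univ _)
    intro p _ hp
    rw [hcol p hp j (fun h => hp (h ▸ hj)), zero_mul]
  -- row i
  have hrowi : ∀ p ∈ S, W i p = ε * W k p * (l p - Cd l W i i)⁻¹ := by
    intro p hp
    have h1 := eig l W ho i p
    have h2 : ∑ q, Cd l W i q * W q p = Cd l W i i * W i p + ε * W k p := by
      rw [Finset.sum_eq_add i k hik'.symm]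
      · congr 2
        rw [hCd i k hik'.symm, hCd0 i k hi hik']
        simp [E]
      · intro c _ hc
        rw [hCd i c hc.1.symm, hCd0 i c hi hc.1]
        simp [E, hc.2, hc.1]
      · simp
      · simp
    rw [h2] at h1
    rw [eq_mul_inv_iff_mul_eq₀ (hC p hp)]
    linear_combination -h1
  have hWii : W i i ≠ 0 := hB i hi
  have hmemi : i ∈ insert i S := Finset.mem_insert_self _ _
  have hcoli : ∀ j ∈ S, W j i * W i i = - (ε * ∑ p ∈ S, W j p * W k p * (l p - Cd l W i i)⁻¹) := by
    intro j hj
    have h1 := ho j i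
    have hji : j ≠ i := fun h => hi (h ▸ hj)
    rw [if_neg hji, hsum j (Finset.mem_insert_of_mem hj)] at h1
    rw [Finset.mul_sum, eq_neg_iff_add_eq_zero, ← h1]
    congr 1
    refine Finset.sum_congr rfl fun p hp => ?_
    rw [hrowi p hp]; ring
  have hWji : ∀ j ∈ S, W j i ≠ 0 := by
    intro j hj h
    have h1 := hcoli j hj
    rw [h, zero_mul] at h1
    exact mul_ne_zero hε (hG j hj) (by linarith)
  have hres : ∀ z ∈ Z, (∀ p ∈ insert i S, l p ≠ z) → ∀ j ∈ S,
      ∑ p, W j p * W i p / (l p - z) ≠ 0 := by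
    intro z hz hzp j hj
    have h1 : ∑ p, W j p * W i p / (l p - z) = ε * ∑ p ∈ S, W j p * W k p *
        (1 / (l p - z) - 1 / (l i - z)) * (l p - Cd l W i i)⁻¹ := by
      simp only [mul_div_assoc]
      rw [hsum j (Finset.mem_insert_of_mem hj)]
      have h2 : W j i * (W i i / (l i - z)) = - (ε * ∑ p ∈ S, W j p * W k p *
          (l p - Cd l W i i)⁻¹) * (1 / (l i - z)) := by
        rw [← hcoli j hj]; ring
      rw [h2, Finset.mul_sum, Finset.mul_sum, neg_mul, Finset.sum_mul, ← Finset.sum_neg_distrib,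
        ← Finset.sum_add_distrib]
      refine Finset.sum_congr rfl fun p hp => ?_
      rw [hrowi p hp]; ring
    rw [h1]
    exact mul_ne_zero hε (hJ z hz hzp j hj)
  refine ⟨W, hA, ho, ?_, ?_, ?_, ?_⟩
  · rintro a b hab (h | h)
    · exact hrow a h b hab.symm
    · exact hcol b h a hab
  · intro a b hab h
    rw [hCd a b hab] at h
    by_cases hEab : E a b = 0
    · rw [hEab, mul_zero, add_zero] at h
      exact g.pat a b hab h
    · simp only [E, ite_eq_right_iff, one_ne_zero, imp_false, not_not] at hEab
      rcases hEab with ⟨rfl, rfl⟩ | ⟨rfl, rfl⟩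
      · exact hik
      · exact hik.symm
  · intro y hy hyp j hj
    by_cases hyS : ∃ p ∈ S, y p ≠ 0
    · rcases Finset.mem_insert.1 hj with rfl | hjS
      · by_cases hyi : y j = 0
        · rw [hsum j hj, hyi, mul_zero, zero_add]
          have : ∑ p ∈ S, W j p * y p = ε * ∑ p ∈ S, W k p * y p * (l p - Cd l W j j)⁻¹ := by
            rw [Finset.mul_sum]
            refine Finset.sum_congr rfl fun p hp => ?_
            rw [hrowi p hp]; ring
          rw [this]
          exact mul_ne_zero hε (hF y hy hyS)
        · exact hEE y hy hyi
      · exact hD y hy hyS j hjS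
    · have hyi : y i ≠ 0 := by
        obtain ⟨p, hp, h⟩ := hyp
        rcases Finset.mem_insert.1 hp with rfl | hpS
        · exact h
        · exact absurd ⟨p, hpS, h⟩ hyS
      rcases Finset.mem_insert.1 hj with rfl | hjS
      · exact hEE y hy hyi
      · push Not at hyS
        rw [hsum j hj, Finset.sum_eq_zero (fun p hp => by rw [hyS p hp, mul_zero]), add_zero]
        exact mul_ne_zero (hWji j hjS) hyi
  · intro z hz hzp a ha b hb
    rcases Finset.mem_insert.1 ha with rfl | haS
    · rcases Finset.mem_insert.1 hb with rfl | hbS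
      · exact hI z hz hzp
      · have := hres z hz hzp b hbS
        simpa only [mul_comm] using this
    · rcases Finset.mem_insert.1 hb with rfl | hbS
      · exact hres z hz hzp a haS
      · exact hH z hz hzp a haS b hbS

lemma good_univ (H : SimpleGraph V) (hH : H.Connected) (l : V → ℝ) (hl : Function.Injective l)
    (Y : Finset (V → ℝ)) (Z : Finset ℝ) : ∃ W, Good H l Y Z Finset.univ W := by
  obtain ⟨r⟩ := hH.nonempty
  have key : ∀ n : ℕ, n + 1 ≤ Fintype.card V → ∃ S : Finset V, r ∈ S ∧ S.card = n + 1 ∧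
      ∀ Y Z, ∃ W, Good H l Y Z S W := by
    intro n
    induction n with
    | zero => exact fun _ => ⟨{r}, by simp, by simp, fun Y Z => ⟨_, good_base H l hl Y Z r⟩⟩
    | succ n ih =>
      intro hn
      obtain ⟨S, hr, hS, hW⟩ := ih (by omega)
      obtain ⟨v, hv⟩ : ∃ v, v ∉ S := by
        by_contra! h
        have := Finset.eq_univ_iff_forall.2 h
        rw [this, Finset.card_univ] at hS
        omega
      obtain ⟨p⟩ := hH.preconnected r v
      obtain ⟨d, -, hd1, hd2⟩ := p.exists_boundary_dart (S : Set V) hr hv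
      refine ⟨insert d.snd S, by simp [hr], ?_, fun Y Z => ?_⟩
      · rw [Finset.card_insert_of_notMem hd2, hS]
      · exact good_step H l hl S d.snd d.fst hd2 hd1 d.adj.symm Y Z hW
  have hpos : 0 < Fintype.card V := Fintype.card_pos_iff.2 ⟨r⟩
  obtain ⟨S, -, hS, hW⟩ := key (Fintype.card V - 1) (by omega)
  have : S = Finset.univ := Finset.eq_univ_of_card S (by omega)
  subst this
  exact hW Y Z

/-- Generic realisation of any simple spectrum by a connected graph. -/
theorem generic_real (H : SimpleGraph V) (hH : H.Connected) (l : V → ℝ)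
    (hl : Function.Injective l) (Y : Finset (V → ℝ)) (hY : ∀ y ∈ Y, y ≠ 0) :
    ∃ U : Matrix V V ℝ, U * Uᵀ = 1 ∧ inS H (U * Matrix.diagonal l * Uᵀ) ∧
      ∀ y ∈ Y, ∀ i, (U *ᵥ y) i ≠ 0 := by
  classical
  obtain ⟨W₀, g⟩ := good_univ H hH l hl Y ∅
  let E : V → V → ℝ := fun a b => if H.Adj a b then 1 else 0
  have e1 : ∀ᶠ W in 𝓝 W₀, ∀ y ∈ Y, ∀ j, ∑ p, W j p * y p ≠ 0 := by
    rw [eventually_all_finset]; intro y hy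
    rw [eventually_all]; intro j
    have : ContinuousAt (fun W : V → V → ℝ => ∑ p, W j p * y p) W₀ := Continuous.continuousAt (by fun_prop)
    refine this.eventually_ne (g.gy y hy ?_ j (Finset.mem_univ _))
    obtain ⟨p, hp⟩ := Function.ne_iff.1 (hY y hy)
    exact ⟨p, Finset.mem_univ _, hp⟩
  have hev := perturb l W₀ g.nd g.orth E (by intro a b; simp [E, H.adj_comm]) _ e1
  have e2 : ∀ᶠ ε in 𝓝[≠] (0:ℝ), ∀ a b, Cd l W₀ a b + ε ≠ 0 := by
    rw [eventually_all]; intro a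
    rw [eventually_all]; intro b
    by_cases h : Cd l W₀ a b = 0
    · filter_upwards [self_mem_nhdsWithin] with ε hε
      rw [h, zero_add]; exact hε
    · apply Eventually.filter_mono nhdsWithin_le_nhds
      have : ContinuousAt (fun ε : ℝ => Cd l W₀ a b + ε) 0 := by fun_prop
      exact this.eventually_ne (by simpa using h)
  obtain ⟨ε, ⟨W, hW, ho, hCd⟩, hε⟩ := ((hev.filter_mono nhdsWithin_le_nhds).and e2).exists
  have hent : ∀ a b, (Matrix.of W * Matrix.diagonal l * (Matrix.of W)ᵀ) a b = Cd l W a b := by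
    intro a b
    rw [Matrix.mul_apply]
    simp only [Matrix.mul_diagonal, Matrix.transpose_apply, Matrix.of_apply, Cd]
    exact Finset.sum_congr rfl fun p _ => by ring
  refine ⟨Matrix.of W, ?_, ⟨?_, ?_⟩, ?_⟩
  · ext a b
    simp [Matrix.mul_apply, ho a b, Matrix.one_apply]
  · ext a b
    rw [Matrix.transpose_apply, hent, hent, Cd_symm]
  · intro a b hab
    rw [hent, hCd a b hab]
    by_cases h : H.Adj a b
    · simpa [E, h] using hε a b
    · simp only [E, h, if_false, mul_zero, add_zero, iff_false, not_not]
      by_contra h'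
      exact h (g.pat a b hab h')
  · intro y hy i
    simpa [Matrix.mulVec, dotProduct] using hW y hy i

end Generic

section Joins
variable {α β : Type*} (G₁ : SimpleGraph α) (X : Set α) (G₂ : SimpleGraph β)

lemma pj_ll (a b : α) : (partialJoin G₁ X G₂).Adj (Sum.inl a) (Sum.inl b) ↔ G₁.Adj a b := by
  simp [partialJoin]

lemma pj_rr (a b : β) : (partialJoin G₁ X G₂).Adj (Sum.inr a) (Sum.inr b) ↔ G₂.Adj a b := by
  simp [partialJoin]

lemma pj_lr (a : α) (b : β) : (partialJoin G₁ X G₂).Adj (Sum.inl a) (Sum.inr b) ↔ a ∈ X := by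
  simp [partialJoin]

lemma pj_rl (a : α) (b : β) : (partialJoin G₁ X G₂).Adj (Sum.inr b) (Sum.inl a) ↔ a ∈ X := by
  simp [partialJoin]

end Joins

section Assemble
variable {α β τ η : Type*} [Fintype α] [Fintype β] [Fintype τ] [Fintype η]
  [DecidableEq α] [DecidableEq β] [DecidableEq τ] [DecidableEq η]

lemma charpoly_conj_orth_s13 (R K : Matrix α α ℝ) (h : R * Rᵀ = 1) :
    (R * K * Rᵀ).charpoly = K.charpoly := by
  rw [Matrix.charpoly_mul_comm, ← mul_assoc, mul_eq_one_comm.1 h, one_mul]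

lemma charpoly_block_conj_s13 (A : Matrix α α ℝ) (B : Matrix α η ℝ) (K U : Matrix η η ℝ)
    (hU : U * Uᵀ = 1) :
    (fromBlocks A (B * Uᵀ) (U * Bᵀ) (U * K * Uᵀ)).charpoly = (fromBlocks A B Bᵀ K).charpoly := by
  have hR : (fromBlocks (1 : Matrix α α ℝ) 0 0 U) * (fromBlocks (1 : Matrix α α ℝ) 0 0 U)ᵀ = 1 := by
    simp [fromBlocks_transpose, fromBlocks_multiply, hU]
  rw [← charpoly_conj_orth_s13 _ (fromBlocks A B Bᵀ K) hR]
  simp [fromBlocks_transpose, fromBlocks_multiply]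

lemma assemble (A : Matrix α α ℝ) (B : Matrix α β ℝ) (D Q : Matrix β β ℝ) (lam : β → ℝ)
    (hQ : Q * Qᵀ = 1) (hD : D = Q * diagonal lam * Qᵀ) (μ : τ → ℝ) (e : η ≃ β ⊕ τ)
    (U : Matrix η η ℝ) (hU : U * Uᵀ = 1) (Y : Matrix α η ℝ)
    (hY : ∀ a v, Y a v = Sum.elim ((B * Q) a) 0 (e v)) :
    (fromBlocks A (Y * Uᵀ) (U * Yᵀ) (U * diagonal (Sum.elim lam μ ∘ e) * Uᵀ)).charpoly =
      (fromBlocks A B Bᵀ D).charpoly * (diagonal μ).charpoly := by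
  rw [charpoly_block_conj_s13 _ _ _ _ hU]
  have hQ' : Qᵀ * Q = 1 := mul_eq_one_comm.1 hQ
  have h1 : (fromBlocks A B Bᵀ D).charpoly =
      (fromBlocks A (B * Q) (B * Q)ᵀ (diagonal lam)).charpoly := by
    rw [← charpoly_block_conj_s13 A (B * Q) (diagonal lam) Q hQ, hD]
    congr 2
    · rw [Matrix.mul_assoc, hQ, Matrix.mul_one]
    · rw [transpose_mul, ← Matrix.mul_assoc, hQ, Matrix.one_mul]
  rw [h1, ← charpoly_fromBlocks_zero₁₂ (M₂₁ := 0)]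
  let f : (α ⊕ β) ⊕ τ ≃ α ⊕ η :=
    (Equiv.sumAssoc α β τ).trans (Equiv.sumCongr (Equiv.refl α) e.symm)
  rw [← charpoly_reindex f]
  congr 1
  ext x y
  obtain ⟨x, rfl⟩ := f.surjective x
  obtain ⟨y, rfl⟩ := f.surjective y
  rw [reindex_apply, submatrix_apply, Equiv.symm_apply_apply, Equiv.symm_apply_apply]
  rcases x with (x | x) | x <;> rcases y with (y | y) | y <;>
    simp [f, hY, diagonal_apply, -transpose_mul]

end Assemble

/-- Theorem 3.8: let `V(G) = V₁ ∪ V₂` (with `V₁ = V₂ᶜ`), `X ⊆ V₁` the vertex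
boundary of `V₂` in `G`, `H` connected with `|H| ≥ |V₂|` and `G' = (G[V₁], X) ∨ H`. If
`M ∈ S(G)` is such that `M[V₂]` has distinct eigenvalues, and `μ₁, …, μ_t`
(`t = |H| − |V₂|`) are distinct reals, none an eigenvalue of `M[V₂]`, then some `N ∈ S(G')`
has spectrum `σ(M) ∪ {μ₁, …, μ_t}`. -/
theorem statement13 (n h : ℕ) (G : SimpleGraph (Fin n)) (V₂ : Finset (Fin n))
    (H : SimpleGraph (Fin h)) (hH : H.Connected) (hsize : V₂.card ≤ h)
    (M : Matrix (Fin n) (Fin n) ℝ) (hM : inS G M)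
    (hdistinct : (specMultiset (M.submatrix (fun a : {x : Fin n // x ∈ V₂} => (a : Fin n))
      (fun a : {x : Fin n // x ∈ V₂} => (a : Fin n)))).Nodup)
    (μ : Fin (h - V₂.card) → ℝ) (hμinj : Function.Injective μ)
    (hμ : ∀ i, μ i ∉ specMultiset (M.submatrix (fun a : {x : Fin n // x ∈ V₂} => (a : Fin n))
      (fun a : {x : Fin n // x ∈ V₂} => (a : Fin n)))) :
    ∃ N : Matrix ((↑(V₂ᶜ : Finset (Fin n)) : Set (Fin n)) ⊕ Fin h)
        ((↑(V₂ᶜ : Finset (Fin n)) : Set (Fin n)) ⊕ Fin h) ℝ,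
      inS (partialJoin (G.induce (↑(V₂ᶜ : Finset (Fin n)) : Set (Fin n)))
        {a : (↑(V₂ᶜ : Finset (Fin n)) : Set (Fin n)) | ∃ w ∈ V₂, G.Adj ↑a w} H) N ∧
      specMultiset N = specMultiset M + Finset.univ.val.map μ := by
  classical
  set D := M.submatrix (fun a : {x : Fin n // x ∈ V₂} => (a : Fin n))
      (fun a : {x : Fin n // x ∈ V₂} => (a : Fin n)) with hDdef
  have hMs : ∀ a b, M a b = M b a := fun a b => hM.1.apply b a
  have hA : D.IsHermitian := by
    ext a b
    simp [D, hMs a b]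
  have hroots : specMultiset D = Finset.univ.val.map hA.eigenvalues := by
    have := hA.roots_charpoly_eq_eigenvalues
    simpa [specMultiset] using this
  have hlam : Function.Injective hA.eigenvalues := by
    rw [hroots] at hdistinct
    intro a b hab
    exact Multiset.inj_on_of_nodup_map hdistinct a (Finset.mem_univ _) b (Finset.mem_univ _) hab
  have hl0 : Function.Injective (Sum.elim hA.eigenvalues μ) := by
    refine hlam.sumElim hμinj ?_
    intro a b hab
    apply hμ b
    rw [hroots, ← hab]
    exact Multiset.mem_map_of_mem _ (Finset.mem_univ _)
  obtain ⟨Q, hQ, hDQ⟩ : ∃ Q : Matrix {x : Fin n // x ∈ V₂} {x : Fin n // x ∈ V₂} ℝ,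
      Q * Qᵀ = 1 ∧ D = Q * diagonal hA.eigenvalues * Qᵀ := by
    refine ⟨hA.eigenvectorUnitary, ?_, ?_⟩
    · have := Unitary.coe_mul_star_self hA.eigenvectorUnitary
      simpa [star_eq_conjTranspose] using this
    · have := hA.spectral_theorem
      rw [Unitary.conjStarAlgAut_apply] at this
      simpa [star_eq_conjTranspose, Function.comp_def] using this
  have hcard : Fintype.card (Fin h) =
      Fintype.card ({x : Fin n // x ∈ V₂} ⊕ Fin (h - V₂.card)) := by
    simp; omega
  let e : Fin h ≃ {x : Fin n // x ∈ V₂} ⊕ Fin (h - V₂.card) := Fintype.equivOfCardEq hcard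
  let A : Matrix ((↑(V₂ᶜ : Finset (Fin n)) : Set (Fin n))) ((↑(V₂ᶜ : Finset (Fin n)) : Set (Fin n)))
    ℝ := fun a b => M a b
  let B : Matrix ((↑(V₂ᶜ : Finset (Fin n)) : Set (Fin n))) {x : Fin n // x ∈ V₂} ℝ :=
    fun a b => M a b
  let Y : Matrix ((↑(V₂ᶜ : Finset (Fin n)) : Set (Fin n))) (Fin h) ℝ :=
    fun a v => Sum.elim ((B * Q) a) 0 (e v)
  have hB0 : ∀ a, Y a = 0 → B a = 0 := by
    intro a ha
    have h1 : (B * Q) a = 0 := by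
      funext p
      have := congrFun ha (e.symm (Sum.inl p))
      simpa [Y] using this
    have h2 : (B * Q * Qᵀ) a = 0 := by
      funext p
      rw [Matrix.mul_apply]
      simp [h1]
    rw [Matrix.mul_assoc, hQ, Matrix.mul_one] at h2
    exact h2
  have hadj : ∀ (a : (↑(V₂ᶜ : Finset (Fin n)) : Set (Fin n))) (w : {x : Fin n // x ∈ V₂}),
      B a w ≠ 0 ↔ G.Adj a w := by
    intro a w
    apply hM.2
    intro hh
    have h1 := a.2
    have h2 := w.2
    rw [← hh] at h2
    simp [h2] at h1
  obtain ⟨U, hU, hUS, hUY⟩ := generic_real H hH (Sum.elim hA.eigenvalues μ ∘ e)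
    (hl0.comp e.injective) ((Finset.univ.image Y).filter (fun y => y ≠ 0))
    (fun y hy => (Finset.mem_filter.1 hy).2)
  have hYU : ∀ a v, (Y * Uᵀ) a v = (U *ᵥ Y a) v := by
    intro a v
    simp [Matrix.mul_apply, Matrix.mulVec, dotProduct, mul_comm]
  have hUYT : (U * Yᵀ) = (Y * Uᵀ)ᵀ := by simp
  have hoff : ∀ a v, (Y * Uᵀ) a v ≠ 0 ↔ ∃ w ∈ V₂, G.Adj ↑a w := by
    intro a v
    rw [hYU]
    constructor
    · intro hne
      by_contra! hc
      apply hne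
      have hBa : B a = 0 := by
        funext w
        by_contra hw
        exact hc w w.2 ((hadj a w).1 hw)
      have hYa : Y a = 0 := by
        have h1 : (B * Q) a = 0 := by
          funext p
          rw [Matrix.mul_apply]
          simp [hBa]
        funext v
        show Sum.elim ((B * Q) a) 0 (e v) = 0
        rw [h1]
        rcases e v with x | x <;> simp
      rw [hYa]; simp
    · rintro ⟨w, hw, hadjw⟩
      apply hUY
      rw [Finset.mem_filter]
      refine ⟨Finset.mem_image_of_mem _ (Finset.mem_univ _), fun h0 => ?_⟩
      exact (hadj a ⟨w, hw⟩).2 hadjw (congrFun (hB0 a h0) ⟨w, hw⟩)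
  refine ⟨fromBlocks A (Y * Uᵀ) (U * Yᵀ) (U * diagonal (Sum.elim hA.eigenvalues μ ∘ e) * Uᵀ),
    ⟨?_, ?_⟩, ?_⟩
  · refine Matrix.IsSymm.fromBlocks ?_ ?_ hUS.1
    · ext a b; exact hMs _ _
    · exact hUYT.symm
  · rintro (a | a) (b | b) hab
    · have hab' : (a : Fin n) ≠ b := fun hh => hab (by rw [Subtype.ext hh])
      have := hM.2 a b hab'
      rw [pj_ll]
      exact this
    · have := hoff a b
      rw [fromBlocks_apply₁₂, pj_lr]
      exact this
    · have := hoff b a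
      rw [fromBlocks_apply₂₁, hUYT, transpose_apply, pj_rl]
      exact this
    · have := hUS.2 a b (fun hh => hab (by rw [hh]))
      rw [fromBlocks_apply₂₂, pj_rr]
      exact this
  · have hch := assemble A B D Q hA.eigenvalues hQ hDQ μ e U hU Y (fun _ _ => rfl)
    have hMch : (fromBlocks A B Bᵀ D).charpoly = M.charpoly := by
      let f : (↑(V₂ᶜ : Finset (Fin n)) : Set (Fin n)) ⊕ {x : Fin n // x ∈ V₂} → Fin n :=
        Sum.elim Subtype.val Subtype.val
      have hf : Function.Bijective f := by
        constructor
        · refine Subtype.val_injective.sumElim Subtype.val_injective ?_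
          intro a b hh
          have h1 := a.2
          have h2 := b.2
          rw [← hh] at h2
          simp [h2] at h1
        · intro x
          by_cases hx : x ∈ V₂
          · exact ⟨Sum.inr ⟨x, hx⟩, rfl⟩
          · exact ⟨Sum.inl ⟨x, by simpa using hx⟩, rfl⟩
      rw [← charpoly_reindex (Equiv.ofBijective f hf).symm M]
      congr 1
      ext x y
      rcases x with x | x <;> rcases y with y | y
      · rfl
      · rfl
      · exact hMs _ _
      · rfl
    rw [hMch] at hch
    unfold specMultiset
    rw [hch, Polynomial.roots_mul
      (mul_ne_zero (charpoly_monic _).ne_zero (charpoly_monic _).ne_zero), charpoly_diagonal,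
      Polynomial.roots_prod _ _ (by
        simp [Finset.prod_ne_zero_iff, Polynomial.X_sub_C_ne_zero])]
    simp
end
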